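/- arXiv:0709.4238 — 7 statements merged into one kernel-verified Lean document; each statement's English description precedes it below -/
import Mathlib

section
/- Let H = H_1 ⊗ ... ⊗ H_m be a multipartite complex Hilbert space with dim H_j = d_j (each d_j ≥ 1) and D = ∏_j d_j. If s ≤ D - ∑_j (d_j - 1) - 1, then there exists an s-dimensional linear subspace S of H that is completely entangled, i.e. S contains no nonzero product vector v_1 ⊗ ... ⊗ v_m. -/
/-!
Identify the basis vector indexed by `k` with the monomial `X ^ (k 1 + ... + k m)`, i.e. send a
coefficient function `φ` to the polynomial `∑ k, φ k * X ^ (∑ j, k j)`. A product vector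
`v 1 ⊗ ... ⊗ v m` goes to the product of the polynomials with coefficient sequences `v j`, which
is nonzero because `ℂ[X]` is a domain. Hence the kernel is completely entangled. The image lies in
the polynomials of degree at most `∑ j, (d j - 1)`, so by rank-nullity the kernel has dimension at
least `D - ∑ j, (d j - 1) - 1`, and it contains subspaces of every smaller dimension.
-/

open MeasureTheory

/-- The multipartite Hilbert space `H = H_1 ⊗ ... ⊗ H_m` with `dim H_j = d j`,
realized concretely as the complex Euclidean space indexed by the product of the
local (basis) index sets: a vector is a coefficient function on the product basis. -/
abbrev MultiSpace {m : ℕ} (d : Fin m → ℕ) : Type :=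
  EuclideanSpace ℂ ((j : Fin m) → Fin (d j))

/-- `φ` is a (nonzero) product vector `v_1 ⊗ ... ⊗ v_m`: its coefficients in the
product basis factorize as `φ (k_1, ..., k_m) = ∏ j, (v j) (k j)`. -/
def IsProdVec {m : ℕ} (d : Fin m → ℕ) (φ : MultiSpace d) : Prop :=
  φ ≠ 0 ∧ ∃ v : (j : Fin m) → EuclideanSpace ℂ (Fin (d j)),
    ∀ k : (j : Fin m) → Fin (d j), φ k = ∏ j, v j (k j)

open Polynomial in
/-- The linear map sending the basis vector indexed by `k` to `X ^ (∑ j, k j)`. -/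
noncomputable def degreeMap {m : ℕ} (d : Fin m → ℕ) : MultiSpace d →ₗ[ℂ] ℂ[X] where
  toFun φ := ∑ k, C (φ k) * X ^ (∑ j, (k j : ℕ))
  map_add' φ ψ := by simp [add_mul, Finset.sum_add_distrib]
  map_smul' c φ := by simp [Finset.mul_sum, mul_assoc, smul_eq_C_mul]

open Polynomial in
/-- Multiplicativity: a product vector goes to a product of univariate polynomials. -/
theorem degreeMap_of_prod {m : ℕ} (d : Fin m → ℕ) (φ : MultiSpace d)
    (v : (j : Fin m) → EuclideanSpace ℂ (Fin (d j)))
    (h : ∀ k : (j : Fin m) → Fin (d j), φ k = ∏ j, v j (k j)) :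
    degreeMap d φ = ∏ j, ∑ i : Fin (d j), C (v j i) * X ^ (i : ℕ) := by
  rw [Finset.prod_univ_sum, Fintype.piFinset_univ]
  change ∑ k, C (φ k) * X ^ (∑ j, (k j : ℕ)) = _
  refine Finset.sum_congr rfl fun k _ => ?_
  rw [h k, map_prod, Finset.prod_mul_distrib, Finset.prod_pow_eq_pow_sum]

open Polynomial in
theorem degreeMap_ker_not_isProdVec {m : ℕ} (d : Fin m → ℕ) (φ : MultiSpace d)
    (hφ : degreeMap d φ = 0) : ¬ IsProdVec d φ := by
  rintro ⟨hne, v, hv⟩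
  rw [degreeMap_of_prod d φ v hv, Finset.prod_eq_zero_iff] at hφ
  obtain ⟨j, -, hj⟩ := hφ
  have hvj : ∀ i, v j i = 0 := fun i => by
    have := congrArg (fun p => p.coeff (i : ℕ)) hj
    simpa [finsetSum_coeff, coeff_C_mul, coeff_X_pow, Fin.val_inj] using this
  refine hne ?_
  ext k
  rw [hv k]
  exact Finset.prod_eq_zero (Finset.mem_univ j) (hvj _)

open Polynomial in
theorem finrank_range_degreeMap_le {m : ℕ} (d : Fin m → ℕ) :
    Module.finrank ℂ (LinearMap.range (degreeMap d)) ≤ ∑ j, (d j - 1) + 1 := by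
  have hle : LinearMap.range (degreeMap d) ≤ degreeLT ℂ (∑ j, (d j - 1) + 1) := by
    rintro _ ⟨φ, rfl⟩
    refine Submodule.sum_mem _ fun k _ => ?_
    rw [mem_degreeLT]
    refine (degree_C_mul_X_pow_le _ _).trans_lt ?_
    have : ∑ j, (k j : ℕ) ≤ ∑ j, (d j - 1) :=
      Finset.sum_le_sum fun j _ => by have := (k j).isLt; omega
    exact_mod_cast Nat.lt_succ_of_le this
  have e := degreeLTEquiv ℂ (∑ j, (d j - 1) + 1)
  have : Module.Finite ℂ (degreeLT ℂ (∑ j, (d j - 1) + 1)) := Module.Finite.equiv e.symm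
  refine (Submodule.finrank_mono hle).trans ?_
  rw [e.finrank_eq]
  simp

/-- Wallach, Parthasarathy; existence direction: if
`s ≤ D - ∑_j (d_j - 1) - 1` where `D = ∏_j d_j`, then there is an `s`-dimensional
completely entangled subspace, i.e. one containing no nonzero product vector. -/
theorem exists_completely_entangled_subspace {m : ℕ} (d : Fin m → ℕ)
    (hd : ∀ j, 1 ≤ d j) (s : ℕ)
    (hs : (s : ℤ) ≤ (∏ j, d j : ℕ) - ∑ j, ((d j : ℤ) - 1) - 1) :
    ∃ S : Submodule ℂ (MultiSpace d), Module.finrank ℂ S = s ∧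
      ∀ φ ∈ S, ¬ IsProdVec d φ := by
  have hrk := (degreeMap d).finrank_range_add_finrank_ker
  have hr := finrank_range_degreeMap_le d
  have hD : Module.finrank ℂ (MultiSpace d) = ∏ j, d j := by
    simp [finrank_euclideanSpace]
  have hsum : ((∑ j, (d j - 1) : ℕ) : ℤ) = ∑ j, ((d j : ℤ) - 1) := by
    rw [Nat.cast_sum]
    exact Finset.sum_congr rfl fun j _ => by have := hd j; omega
  have hker : s ≤ Module.finrank ℂ (LinearMap.ker (degreeMap d)) := by
    rw [← hsum] at hs
    omega
  obtain ⟨f, hf⟩ := exists_linearIndependent_of_le_finrank hker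
  refine ⟨(Submodule.span ℂ (Set.range f)).map (LinearMap.ker (degreeMap d)).subtype, ?_, ?_⟩
  · rw [LinearEquiv.finrank_eq (Submodule.equivMapOfInjective _
      (Submodule.injective_subtype _) _).symm, finrank_span_eq_card hf, Fintype.card_fin]
  · rintro _ ⟨x, -, rfl⟩
    exact degreeMap_ker_not_isProdVec d _ x.2
end

section
/- Let H = H_1 ⊗ ... ⊗ H_m be a multipartite complex Hilbert space with dim H_j = d_j, and let n > ∑_j (d_j - 1). Then for almost every n-tuple (ψ_1, ..., ψ_n) of unit vectors of H (with respect to the n-fold product of the uniform rotation-invariant probability measure on the unit sphere of H), there is no nonzero product vector φ = v_1 ⊗ ... ⊗ v_m with ⟨φ, ψ_k⟩ = 0 for all k = 1, ..., n. -/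
/-!
The proof is a quantitative dimension count.

A product vector is proportional to one whose `j`-th factor has one coordinate equal to `1` and all
others in the closed unit disc (`IsProdVec.exists_chartVec`). So it suffices to treat finitely many
smooth families `Φ : ℂ^s → H` with `‖Φ z‖ ≥ 1`, parameters in a polydisc, and `s = ∑ (d_j - 1) < n`.

The probabilistic input is the small-ball estimate `μ {|⟨u, ψ⟩| ≤ δ} ≤ C δ²` for `‖u‖ ≥ 1`
(`exists_small_ball_bound`), deduced from unitary invariance alone by averaging over `u` in the unit
ball and bounding the Lebesgue measure of a slab (`measure_slab_le`).

If `Φ z` is orthogonal to all `ψ k`, then `|⟨Φ z', ψ k⟩| ≤ K ε` for all `k` and all `z'` in the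
`ε`-ball around `z`, where `K` is a Lipschitz constant of `Φ`. This ball has volume of order
`ε ^ (2 s)`, whereas the expected volume of the set of such `z'` is `O(ε ^ (2 n))` by the small-ball
estimate and independence. By Markov's inequality the bad event has probability
`O(ε ^ (2 (n - s)))` for every `ε ∈ (0, 1]`, hence it is null (`measure_orthogonal_family_eq_zero`).
-/

open MeasureTheory
open scoped ComplexInnerProductSpace

/-- The map induced on the unit sphere by a unitary (linear isometric) operator. -/
noncomputable def sphereMap {E : Type*} [NormedAddCommGroup E] [InnerProductSpace ℂ E]
    (U : E ≃ₗᵢ[ℂ] E) (x : Metric.sphere (0 : E) 1) : Metric.sphere (0 : E) 1 :=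
  ⟨U x, by
    have hx : ‖(x : E)‖ = 1 := mem_sphere_zero_iff_norm.mp x.2
    simp [mem_sphere_zero_iff_norm, hx]⟩

/-! ### Small-ball estimate for an invariant measure -/

open Metric in
/-- The slab `|⟨e, y⟩| ≤ δ` in the unit ball has volume `O(δ²)`: its translates by `t • e`, with `t`
in the unit disc of `ℂ`, stay in the ball of radius `2`, and each point `y` is covered only by the
`t` in a disc of radius `δ`. -/
theorem measure_slab_le {E : Type*} [NormedAddCommGroup E] [InnerProductSpace ℂ E]
    [FiniteDimensional ℂ E] [MeasurableSpace E] [BorelSpace E] (ν : Measure E)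
    [ν.IsAddHaarMeasure] (e : E) (he : ‖e‖ = 1) {δ : ℝ} (hδ : 0 ≤ δ) :
    ν (closedBall 0 1 ∩ {y | ‖⟪e, y⟫‖ ≤ δ}) ≤
      ENNReal.ofReal (δ ^ 2) * ν (closedBall 0 2) := by
  have : FiniteDimensional ℝ E := FiniteDimensional.complexToReal E
  have : ProperSpace E := FiniteDimensional.proper ℂ E
  set S : Set E := closedBall 0 1 ∩ {y | ‖⟪e, y⟫‖ ≤ δ} with hS
  have hSc : IsClosed S :=
    isClosed_closedBall.inter (isClosed_le (by fun_prop) continuous_const)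
  set T : Set (ℂ × E) := {p | p.2 - p.1 • e ∈ S} with hT
  have hTm : MeasurableSet T := (hSc.preimage (f := fun p : ℂ × E => p.2 - p.1 • e)
    (by fun_prop)).measurableSet
  set b : ENNReal := volume (ball (0 : ℂ) 1) with hb
  have hvol : ∀ (c : ℂ) {r : ℝ}, 0 ≤ r → volume (closedBall c r) = ENNReal.ofReal (r ^ 2) * b := by
    intro c r hr
    rw [Measure.addHaar_closedBall _ _ hr, Complex.finrank_real_complex]
  have hb0 : b ≠ 0 := (measure_ball_pos _ _ one_pos).ne'
  have hbt : b ≠ ⊤ := measure_ball_lt_top.ne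
  have h1 : ((volume.restrict (closedBall (0 : ℂ) 1)).prod ν) T = b * ν S := by
    rw [Measure.prod_apply hTm]
    have : ∀ t : ℂ, ν (Prod.mk t ⁻¹' T) = ν S := by
      intro t
      have : Prod.mk t ⁻¹' T = (fun y => y + -(t • e)) ⁻¹' S := by
        ext y; simp [hT, sub_eq_add_neg]
      rw [this, measure_preimage_add_right]
    simp_rw [this]
    rw [lintegral_const, Measure.restrict_apply_univ, hvol 0 zero_le_one]
    simp [mul_comm]
  have h2 : ((volume.restrict (closedBall (0 : ℂ) 1)).prod ν) T ≤
      ENNReal.ofReal (δ ^ 2) * b * ν (closedBall 0 2) := by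
    rw [Measure.prod_apply_symm hTm, ← lintegral_indicator_const isClosed_closedBall.measurableSet]
    refine lintegral_mono fun y => ?_
    rw [Measure.restrict_apply (hTm.preimage (by fun_prop))]
    by_cases hy : y ∈ closedBall (0 : E) 2
    · rw [Set.indicator_of_mem hy, ← hvol ⟪e, y⟫ hδ]
      refine measure_mono ?_
      rintro t ⟨ht, -⟩
      have ht' : ‖⟪e, y - t • e⟫‖ ≤ δ := ht.2
      rw [inner_sub_right, inner_smul_right, inner_self_eq_norm_sq_to_K, he] at ht'
      rw [mem_closedBall, dist_comm, dist_eq_norm]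
      simpa using ht'
    · rw [Set.indicator_of_notMem hy, nonpos_iff_eq_zero]
      refine measure_mono_null ?_ measure_empty
      rintro t ⟨ht, ht1⟩
      apply hy
      have h3 : ‖y - t • e‖ ≤ 1 := by simpa using ht.1
      have h4 : ‖t • e‖ ≤ 1 := by rw [norm_smul, he, mul_one]; simpa using ht1
      rw [mem_closedBall_zero_iff]
      calc ‖y‖ = ‖(y - t • e) + t • e‖ := by simp
        _ ≤ ‖y - t • e‖ + ‖t • e‖ := norm_add_le _ _
        _ ≤ 2 := by linarith
  rw [h1] at h2
  refine (ENNReal.mul_le_mul_iff_right hb0 hbt).1 (h2.trans (le_of_eq ?_))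
  ring

/-- The unitary group acts transitively on the unit sphere. -/
theorem exists_unitary_apply_eq {E : Type*} [NormedAddCommGroup E] [InnerProductSpace ℂ E]
    [FiniteDimensional ℂ E] {x y : E} (hx : ‖x‖ = 1) (hy : ‖y‖ = 1) :
    ∃ U : E ≃ₗᵢ[ℂ] E, U x = y := by
  let e := LinearIsometryEquiv.toSpanUnitSingleton (𝕜 := ℂ) x hx
  let L := (LinearIsometry.toSpanSingleton ℂ E hy).comp e.symm.toLinearIsometry
  refine ⟨L.extend.toLinearIsometryEquiv rfl, ?_⟩
  have h1 : ((e 1 : _) : E) = x := by simp [e]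
  have h2 : L (e 1) = y := by simp [L]
  calc _ = L.extend ((e 1 : _) : E) := by rw [h1]; rfl
    _ = y := by rw [LinearIsometry.extend_apply, h2]

open Metric in
/-- Small-ball estimate for a unitarily invariant probability measure: for `‖u‖ ≥ 1`, the
probability that `|⟨u, ψ⟩| ≤ δ` is `O(δ²)`, uniformly in `u`. By invariance that probability is
the same for all unit vectors, so it is bounded by its average over the unit ball, and exchanging the
order of integration turns this average into the volume of a slab. -/
theorem exists_small_ball_bound {E : Type*} [NormedAddCommGroup E] [InnerProductSpace ℂ E]
    [FiniteDimensional ℂ E] [MeasurableSpace E] [BorelSpace E]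
    (μ : Measure (sphere (0 : E) 1)) [IsProbabilityMeasure μ]
    (hinv : ∀ U : E ≃ₗᵢ[ℂ] E, μ.map (sphereMap U) = μ) :
    ∃ C : ENNReal, C ≠ ⊤ ∧ ∀ (u : E), 1 ≤ ‖u‖ → ∀ δ : ℝ, 0 ≤ δ →
      μ {ψ | ‖⟪u, (ψ : E)⟫‖ ≤ δ} ≤ C * ENNReal.ofReal (δ ^ 2) := by
  have : FiniteDimensional ℝ E := FiniteDimensional.complexToReal E
  have : ProperSpace E := FiniteDimensional.proper ℂ E
  have : SecondCountableTopology E := inferInstance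
  let ν : Measure E := Measure.addHaar
  have hν0 : ν (closedBall 0 1) ≠ 0 := (measure_closedBall_pos _ _ one_pos).ne'
  have hνt : ν (closedBall 0 1) ≠ ⊤ := measure_closedBall_lt_top.ne
  have hclosed : ∀ (u : E) (δ : ℝ),
      IsClosed {ψ : sphere (0 : E) 1 | ‖⟪u, (ψ : E)⟫‖ ≤ δ} := fun u δ =>
    isClosed_le (by fun_prop) continuous_const
  have hU : ∀ (U : E ≃ₗᵢ[ℂ] E) (x : E) (δ : ℝ), μ {ψ | ‖⟪U x, (ψ : E)⟫‖ ≤ δ} =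
      μ {ψ | ‖⟪x, (ψ : E)⟫‖ ≤ δ} := by
    intro U x δ
    have hm : Measurable (sphereMap U) :=
      (Continuous.subtype_mk (U.continuous.comp continuous_subtype_val) _).measurable
    conv_lhs => rw [← hinv U]
    rw [Measure.map_apply hm (hclosed _ _).measurableSet]
    congr 1
    ext ψ
    simp [sphereMap]
  -- By invariance `u` may be rotated to the direction of `x`; shrinking it to `x` enlarges the event.
  have hball : ∀ u : E, ‖u‖ = 1 → ∀ x ∈ closedBall (0 : E) 1, ∀ δ : ℝ, 0 ≤ δ →
      μ {ψ | ‖⟪u, (ψ : E)⟫‖ ≤ δ} ≤ μ {ψ | ‖⟪x, (ψ : E)⟫‖ ≤ δ} := by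
    intro u hu x hx δ hδ
    rw [mem_closedBall_zero_iff] at hx
    by_cases hx0 : x = 0
    · refine measure_mono fun ψ _ => ?_
      simpa [hx0] using hδ
    have hxn : ‖x‖ ≠ 0 := norm_ne_zero_iff.2 hx0
    set y : E := ((‖x‖ : ℂ)⁻¹) • x with hy
    have hyn : ‖y‖ = 1 := by
      rw [hy, norm_smul, norm_inv, Complex.norm_real, norm_norm, inv_mul_cancel₀ hxn]
    have hxy : x = (‖x‖ : ℂ) • y := by
      rw [hy, smul_smul, mul_inv_cancel₀ (by exact_mod_cast hxn), one_smul]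
    obtain ⟨U, hUu⟩ := exists_unitary_apply_eq hu hyn
    rw [← hU U, hUu]
    refine measure_mono fun ψ hψ => ?_
    have hψ' : ‖⟪y, (ψ : E)⟫‖ ≤ δ := hψ
    show ‖⟪x, (ψ : E)⟫‖ ≤ δ
    rw [hxy, inner_smul_left, norm_mul]
    have : ‖(starRingEnd ℂ) (‖x‖ : ℂ)‖ ≤ 1 := by simpa using hx
    calc _ ≤ 1 * ‖⟪y, (ψ : E)⟫‖ := by gcongr
      _ ≤ δ := by simpa using hψ'
  refine ⟨ν (closedBall 0 2) / ν (closedBall 0 1),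
    ENNReal.div_ne_top measure_closedBall_lt_top.ne hν0, ?_⟩
  have key : ∀ u : E, ‖u‖ = 1 → ∀ δ : ℝ, 0 ≤ δ → μ {ψ | ‖⟪u, (ψ : E)⟫‖ ≤ δ} ≤
      ν (closedBall 0 2) / ν (closedBall 0 1) * ENNReal.ofReal (δ ^ 2) := by
    intro u hu δ hδ
    set T : Set (E × sphere (0 : E) 1) := {p | ‖⟪p.1, (p.2 : E)⟫‖ ≤ δ} with hT
    have hTm : MeasurableSet T :=
      (isClosed_le (by fun_prop) continuous_const : IsClosed T).measurableSet
    have h1 : μ {ψ | ‖⟪u, (ψ : E)⟫‖ ≤ δ} * ν (closedBall 0 1) ≤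
        ((ν.restrict (closedBall 0 1)).prod μ) T := by
      rw [Measure.prod_apply hTm, ← setLIntegral_const]
      exact setLIntegral_mono' isClosed_closedBall.measurableSet fun x hx => hball u hu x hx δ hδ
    have h2 : ((ν.restrict (closedBall 0 1)).prod μ) T ≤
        ENNReal.ofReal (δ ^ 2) * ν (closedBall 0 2) := by
      rw [Measure.prod_apply_symm hTm]
      calc _ ≤ ∫⁻ _ : sphere (0 : E) 1, ENNReal.ofReal (δ ^ 2) * ν (closedBall 0 2) ∂μ := by
            refine lintegral_mono fun ψ => ?_
            rw [Measure.restrict_apply (hTm.preimage (by fun_prop))]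
            refine le_trans (measure_mono ?_)
              (measure_slab_le ν (ψ : E) (mem_sphere_zero_iff_norm.1 ψ.2) hδ)
            rintro x ⟨hx, hx1⟩
            refine ⟨hx1, ?_⟩
            have hx' : ‖⟪x, (ψ : E)⟫‖ ≤ δ := hx
            show ‖⟪(ψ : E), x⟫‖ ≤ δ
            rwa [norm_inner_symm]
        _ = _ := by simp
    calc _ ≤ (ENNReal.ofReal (δ ^ 2) * ν (closedBall 0 2)) / ν (closedBall 0 1) :=
          ENNReal.le_div_iff_mul_le (.inl hν0) (.inl hνt) |>.2 (h1.trans h2)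
      _ = _ := by simp only [div_eq_mul_inv]; ring
  intro u hu δ hδ
  have hu0 : ‖u‖ ≠ 0 := by positivity
  refine le_trans (measure_mono fun ψ hψ => ?_) (key ((‖u‖ : ℂ)⁻¹ • u) ?_ δ hδ)
  · have hψ' : ‖⟪u, (ψ : E)⟫‖ ≤ δ := hψ
    show ‖⟪(‖u‖ : ℂ)⁻¹ • u, (ψ : E)⟫‖ ≤ δ
    rw [inner_smul_left, norm_mul]
    have : ‖(starRingEnd ℂ) ((‖u‖ : ℂ)⁻¹)‖ ≤ 1 := by
      simpa using inv_le_one_of_one_le₀ hu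
    calc _ ≤ 1 * ‖⟪u, (ψ : E)⟫‖ := by gcongr
      _ ≤ δ := by simpa using hψ'
  · rw [norm_smul, norm_inv, Complex.norm_real, norm_norm, inv_mul_cancel₀ hu0]

/-! ### Dimension count -/

open Metric Filter Topology in
/-- A quantitative dimension count. Let `Φ` parametrize vectors of norm at least `1` by fewer than
`n` complex parameters. If `Φ z` is orthogonal to all `ψ k`, then `|⟨Φ z', ψ k⟩| = O(ε)` on the ball
of radius `ε` around `z`, of volume of order `ε ^ (2 card I)`, while for fixed `z'` this happens with
probability `O(ε ^ (2n))`. Comparing the two (Markov and Fubini) and letting `ε → 0` gives a null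
set. -/
theorem measure_orthogonal_family_eq_zero {E : Type*} [NormedAddCommGroup E]
    [InnerProductSpace ℂ E] [FiniteDimensional ℂ E] [MeasurableSpace E] [BorelSpace E]
    (μ : Measure (sphere (0 : E) 1)) [IsProbabilityMeasure μ]
    (hinv : ∀ U : E ≃ₗᵢ[ℂ] E, μ.map (sphereMap U) = μ)
    {I : Type*} [Fintype I] {n : ℕ} (hn : Fintype.card I < n)
    (Φ : (I → ℂ) → E) (hΦ : ContDiff ℝ 1 Φ) (hΦ1 : ∀ z, 1 ≤ ‖Φ z‖) :
    (Measure.pi fun _ : Fin n => μ)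
      {ψ | ∃ z ∈ closedBall (0 : I → ℂ) 1, ∀ k, ⟪Φ z, (ψ k : E)⟫ = 0} = 0 := by
  have : ProperSpace E := FiniteDimensional.proper ℂ E
  have : SecondCountableTopology E := inferInstance
  obtain ⟨C, hC, hsmall⟩ := exists_small_ball_bound μ hinv
  obtain ⟨K, hK⟩ := hΦ.contDiffOn.exists_lipschitzOnWith one_ne_zero
    (convex_closedBall (0 : I → ℂ) 2) (isCompact_closedBall _ _)
  have hΦc : Continuous Φ := hΦ.continuous
  set P : Measure (Fin n → sphere (0 : E) 1) := Measure.pi fun _ => μ with hP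
  set B : Set (Fin n → sphere (0 : E) 1) :=
    {ψ | ∃ z ∈ closedBall (0 : I → ℂ) 1, ∀ k, ⟪Φ z, (ψ k : E)⟫ = 0} with hB
  set s := Fintype.card I with hs
  set b : ENNReal := volume (ball (0 : I → ℂ) 1) with hb
  have hb0 : b ≠ 0 := (measure_ball_pos _ _ one_pos).ne'
  set V : ENNReal := volume (closedBall (0 : I → ℂ) 2) with hV
  have hVt : V ≠ ⊤ := measure_closedBall_lt_top.ne
  have hvol : ∀ (c : I → ℂ) {r : ℝ}, 0 ≤ r →
      volume (closedBall c r) = ENNReal.ofReal (r ^ (2 * s)) * b := by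
    intro c r hr
    rw [Measure.addHaar_closedBall _ _ hr, Module.finrank_pi_fintype]
    simp [mul_comm, hs, hb]
  set M : ENNReal := (C * ENNReal.ofReal ((K : ℝ) ^ 2)) ^ n * V with hM
  have hMt : M ≠ ⊤ :=
    ENNReal.mul_ne_top (ENNReal.pow_ne_top (ENNReal.mul_ne_top hC ENNReal.ofReal_ne_top)) hVt
  have key : ∀ ε : ℝ, 0 < ε → ε ≤ 1 → b * P B ≤ ENNReal.ofReal (ε ^ 2) * M := by
    intro ε hε hε1
    set T : Set ((I → ℂ) × (Fin n → sphere (0 : E) 1)) :=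
      {p | ∀ k, ‖⟪Φ p.1, (p.2 k : E)⟫‖ ≤ K * ε} with hT
    have hTm : MeasurableSet T := by
      have : IsClosed T := by
        rw [hT, Set.ofPred_forall]
        refine isClosed_iInter fun k => isClosed_le ?_ continuous_const
        have h1 : Continuous fun p : (I → ℂ) × (Fin n → sphere (0 : E) 1) => Φ p.1 :=
          hΦc.comp continuous_fst
        have h2 : Continuous fun p : (I → ℂ) × (Fin n → sphere (0 : E) 1) => (p.2 k : E) := by
          fun_prop
        exact (h1.inner h2).norm
      exact this.measurableSet
    have h1 : ENNReal.ofReal (ε ^ (2 * s)) * b * P B ≤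
        ((volume.restrict (closedBall (0 : I → ℂ) 2)).prod P) T := by
      rw [Measure.prod_apply_symm hTm]
      refine le_trans ?_ (mul_meas_ge_le_lintegral (measurable_measure_prodMk_right hTm)
        (ENNReal.ofReal (ε ^ (2 * s)) * b))
      gcongr
      rintro ψ ⟨z, hz, hzψ⟩
      rw [Set.mem_ofPred_eq, ← hvol z hε.le, Measure.restrict_apply (hTm.preimage (by fun_prop))]
      refine measure_mono fun z' hz' => ?_
      rw [mem_closedBall_zero_iff] at hz
      have hz2 : z' ∈ closedBall (0 : I → ℂ) 2 := by
        rw [mem_closedBall, dist_eq_norm] at hz'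
        rw [mem_closedBall_zero_iff]
        calc ‖z'‖ = ‖(z' - z) + z‖ := by simp
          _ ≤ ‖z' - z‖ + ‖z‖ := norm_add_le _ _
          _ ≤ 2 := by linarith
      refine ⟨fun k => ?_, hz2⟩
      have hd : ‖Φ z' - Φ z‖ ≤ K * ε := by
        rw [← dist_eq_norm]
        refine (hK.dist_le_mul _ hz2 _ ?_).trans ?_
        · rw [mem_closedBall_zero_iff]; linarith
        · gcongr; exact hz'
      calc ‖⟪Φ z', (ψ k : E)⟫‖ = ‖⟪Φ z' - Φ z, (ψ k : E)⟫‖ := by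
            rw [inner_sub_left, hzψ k, sub_zero]
        _ ≤ ‖Φ z' - Φ z‖ * ‖(ψ k : E)‖ := norm_inner_le_norm _ _
        _ ≤ K * ε := by rwa [mem_sphere_zero_iff_norm.1 (ψ k).2, mul_one]
    have h2 : ((volume.restrict (closedBall (0 : I → ℂ) 2)).prod P) T ≤
        ENNReal.ofReal (ε ^ (2 * n)) * M := by
      rw [Measure.prod_apply hTm]
      calc _ ≤ ∫⁻ _ in closedBall (0 : I → ℂ) 2, (C * ENNReal.ofReal ((K * ε) ^ 2)) ^ n := by
            refine lintegral_mono fun z => ?_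
            have : Prod.mk z ⁻¹' T =
                Set.univ.pi fun _ => {x : sphere (0 : E) 1 | ‖⟪Φ z, (x : E)⟫‖ ≤ K * ε} := by
              ext ψ; simp [hT]
            rw [this, hP, Measure.pi_pi, Finset.prod_const, Finset.card_univ, Fintype.card_fin]
            gcongr
            exact hsmall _ (hΦ1 z) _ (by positivity)
        _ = _ := by
            rw [setLIntegral_const, hM, mul_pow (K : ℝ) ε 2, ENNReal.ofReal_mul (by positivity),
              pow_mul ε 2 n, ENNReal.ofReal_pow (by positivity : 0 ≤ ε ^ 2), hV]
            ring
    have h3 : ENNReal.ofReal (ε ^ (2 * n)) ≤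
        ENNReal.ofReal (ε ^ (2 * s)) * ENNReal.ofReal (ε ^ 2) := by
      rw [← ENNReal.ofReal_mul (by positivity), ← pow_add]
      exact ENNReal.ofReal_le_ofReal (pow_le_pow_of_le_one hε.le hε1 (by omega))
    have h0 : ENNReal.ofReal (ε ^ (2 * s)) ≠ 0 := by
      simpa using pow_pos hε _
    refine (ENNReal.mul_le_mul_iff_right h0 ENNReal.ofReal_ne_top).1 ?_
    calc _ = ENNReal.ofReal (ε ^ (2 * s)) * b * P B := by ring
      _ ≤ ENNReal.ofReal (ε ^ (2 * n)) * M := h1.trans h2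
      _ ≤ ENNReal.ofReal (ε ^ (2 * s)) * ENNReal.ofReal (ε ^ 2) * M := by gcongr
      _ = _ := by ring
  have hlim : Tendsto (fun ε : ℝ => ENNReal.ofReal (ε ^ 2) * M) (𝓝[>] 0) (𝓝 0) := by
    have h1 : Tendsto (fun ε : ℝ => ENNReal.ofReal (ε ^ 2)) (𝓝 0) (𝓝 0) := by
      have : Continuous fun ε : ℝ => ENNReal.ofReal (ε ^ 2) :=
        ENNReal.continuous_ofReal.comp (continuous_pow 2)
      simpa using this.tendsto 0
    simpa using ENNReal.Tendsto.mul_const (h1.mono_left nhdsWithin_le_nhds) (.inr hMt)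
  have hle : b * P B ≤ 0 := by
    refine ge_of_tendsto hlim ?_
    filter_upwards [Ioc_mem_nhdsGT (zero_lt_one' ℝ)] with ε hε using key ε hε.1 hε.2
  exact (mul_eq_zero.1 (le_antisymm hle bot_le)).resolve_left hb0

/-! ### Affine charts of product vectors -/

/-- The parameters of the affine chart of product vectors at the multi-index `i`: all coordinates of
the `m` local vectors except the `i j`-th coordinate of the `j`-th one, which is normalized to `1`. -/
abbrev ChartIndex {m : ℕ} {d : Fin m → ℕ} (i : (j : Fin m) → Fin (d j)) : Type :=
  Σ j : Fin m, {k : Fin (d j) // k ≠ i j}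

/-- The `j`-th local vector with `i j`-th coordinate `1` and other coordinates given by `z`. -/
noncomputable def chartLocal {m : ℕ} {d : Fin m → ℕ} (i : (j : Fin m) → Fin (d j))
    (z : ChartIndex i → ℂ) (j : Fin m) (k : Fin (d j)) : ℂ :=
  if h : k = i j then 1 else z ⟨j, k, h⟩

/-- The product vector with parameters `z` in the affine chart at `i`. -/
noncomputable def chartVec {m : ℕ} {d : Fin m → ℕ} (i : (j : Fin m) → Fin (d j))
    (z : ChartIndex i → ℂ) : MultiSpace d :=
  WithLp.toLp 2 fun k => ∏ j, chartLocal i z j (k j)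

theorem card_chartIndex {m : ℕ} {d : Fin m → ℕ} (i : (j : Fin m) → Fin (d j)) :
    (Fintype.card (ChartIndex i) : ℤ) = ∑ j, ((d j : ℤ) - 1) := by
  rw [Fintype.card_sigma]
  push_cast
  refine Finset.sum_congr rfl fun j _ => ?_
  have : 1 ≤ d j := (i j).pos
  rw [Fintype.card_subtype_compl]
  simp [this]

theorem contDiff_chartVec {m : ℕ} {d : Fin m → ℕ} (i : (j : Fin m) → Fin (d j)) :
    ContDiff ℝ 1 (chartVec i) := by
  have h : ContDiff ℝ 1 fun z (k : (j : Fin m) → Fin (d j)) => ∏ j, chartLocal i z j (k j) := by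
    refine contDiff_pi.2 fun k => contDiff_prod fun j _ => ?_
    unfold chartLocal
    split_ifs with h
    · exact contDiff_const
    · exact contDiff_apply ℝ ℂ _
  exact (PiLp.contDiff_toLp (𝕜 := ℝ) (p := 2)).comp h

theorem one_le_norm_chartVec {m : ℕ} {d : Fin m → ℕ} (i : (j : Fin m) → Fin (d j))
    (z : ChartIndex i → ℂ) : 1 ≤ ‖chartVec i z‖ := by
  have h : chartVec i z i = 1 := by simp [chartVec, chartLocal]
  simpa [h] using PiLp.norm_apply_le (chartVec i z) i

/-- Every product vector has a scalar multiple that is a chart vector with parameters in the unit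
polydisc: divide each local vector by its coordinate of largest modulus. -/
theorem IsProdVec.exists_chartVec {m : ℕ} {d : Fin m → ℕ} {φ : MultiSpace d}
    (h : IsProdVec d φ) : ∃ (i : (j : Fin m) → Fin (d j)) (z : ChartIndex i → ℂ) (c : ℂ),
      z ∈ Metric.closedBall 0 1 ∧ chartVec i z = c • φ := by
  obtain ⟨h0, v, hv⟩ := h
  obtain ⟨k₀, hk₀⟩ : ∃ k, φ k ≠ 0 := by
    by_contra! hcon
    exact h0 (by ext k; simpa using hcon k)
  have hk₁ : ∀ j, v j (k₀ j) ≠ 0 := fun j hj =>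
    hk₀ ((hv k₀).trans (Finset.prod_eq_zero (Finset.mem_univ j) hj))
  have hmax : ∀ j, ∃ a, ∀ k, ‖v j k‖ ≤ ‖v j a‖ := fun j =>
    have : Nonempty (Fin (d j)) := ⟨k₀ j⟩
    Finite.exists_max fun k => ‖v j k‖
  choose i hi using hmax
  have hvi : ∀ j, v j (i j) ≠ 0 := fun j =>
    norm_pos_iff.1 ((norm_pos_iff.2 (hk₁ j)).trans_le (hi j _))
  refine ⟨i, fun p => v p.1 p.2.1 / v p.1 (i p.1), ∏ j, (v j (i j))⁻¹, ?_, ?_⟩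
  · rw [mem_closedBall_zero_iff, pi_norm_le_iff_of_nonneg zero_le_one]
    intro p
    rw [norm_div]
    exact div_le_one_of_le₀ (hi _ _) (norm_nonneg _)
  · ext k
    rw [PiLp.smul_apply, hv, smul_eq_mul, ← Finset.prod_mul_distrib]
    change ∏ j, chartLocal i _ j (k j) = _
    refine Finset.prod_congr rfl fun j _ => ?_
    unfold chartLocal
    split_ifs with hk
    · rw [hk, inv_mul_cancel₀ (hvi j)]
    · exact div_eq_inv_mul _ _

/-- if `n > ∑_j (d_j - 1)`, then for almost every `n`-tuple of unit
vectors (w.r.t. the `n`-fold product of the uniform, i.e. unitarily invariant, Borel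
probability measure `μ` on the unit sphere of `H`), no nonzero product vector is
orthogonal to all of `ψ_1, ..., ψ_n`. -/
theorem no_product_vector_orthogonal_of_random {m : ℕ} (d : Fin m → ℕ) (n : ℕ)
    (hn : (n : ℤ) > ∑ j, ((d j : ℤ) - 1))
    [MeasurableSpace (MultiSpace d)] [BorelSpace (MultiSpace d)]
    (μ : Measure (Metric.sphere (0 : MultiSpace d) 1)) [IsProbabilityMeasure μ]
    (hinv : ∀ U : MultiSpace d ≃ₗᵢ[ℂ] MultiSpace d, μ.map (sphereMap U) = μ) :
    ∀ᵐ ψ ∂(Measure.pi fun _ : Fin n => μ),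
      ¬ ∃ φ : MultiSpace d, IsProdVec d φ ∧
        ∀ k : Fin n, ⟪φ, (ψ k : MultiSpace d)⟫ = 0 := by
  have hnull : ∀ i : (j : Fin m) → Fin (d j), (Measure.pi fun _ : Fin n => μ)
      {ψ | ∃ z ∈ Metric.closedBall (0 : ChartIndex i → ℂ) 1,
        ∀ k, ⟪chartVec i z, (ψ k : MultiSpace d)⟫ = 0} = 0 := fun i =>
    measure_orthogonal_family_eq_zero μ hinv (by have := card_chartIndex i; omega)
      (chartVec i) (contDiff_chartVec i) (one_le_norm_chartVec i)
  refine measure_mono_null ?_ (measure_iUnion_null hnull)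
  intro ψ hψ
  obtain ⟨φ, hφ, horth⟩ := not_not.1 hψ
  obtain ⟨i, z, c, hz, hc⟩ := hφ.exists_chartVec
  exact Set.mem_iUnion.2 ⟨i, z, hz, fun k => by rw [hc, inner_smul_left, horth k, mul_zero]⟩
end

section
/- Let H = H_1 ⊗ ... ⊗ H_m be a multipartite complex Hilbert space with dim H_j = d_j and D = ∏_j d_j, let s ≤ D - ∑_j (d_j - 1) - 1, and fix any s-dimensional subspace S_0 of H. Then for Haar-almost every unitary operator U on H, the subspace U(S_0) contains no nonzero product vector v_1 ⊗ ... ⊗ v_m. -/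
/-!
The proof is a dimension count, transferred from Lebesgue measure to Haar measure by Fubini.

Call an `s`-tuple `X` of vectors of `H` bad if some nontrivial combination of it lies in the cone of
product vectors or vanishes. Solving for one entry `X i₀` exhibits the set of bad tuples as a finite
union of images of smooth maps, from real vector spaces of dimension
`2 ((s - 1) + (s - 1) D + 1 + ∑ (d j - 1))`. The hypothesis says precisely that this is smaller than
`2 s D`, the dimension of the space of tuples, so the bad tuples are Lebesgue-null
(`dimH_badTuples_lt`), and so are their images under any unitary `U⁻¹`. By Fubini there is one tuple
`X` such that `U X` is not bad for almost every `U`. Such an `X` is linearly independent, hence some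
unitary `V` maps `S₀` into its span (`exists_unitary_map_le`), and the conclusion holds for `V S₀`.
Right translation by `V` preserves `ν`-null sets, which gives it for `S₀`.
-/

open MeasureTheory

section Aux

variable {m : ℕ} {d : Fin m → ℕ} {s : ℕ}

/-- A chart of the cone of product vectors: `(λ, w) ↦ λ • ⨂ v_j`, where `v_j` has entry `1` at
position `k j` and entries `w j` elsewhere. Taking `λ = 0` gives the zero vector. -/
def coneParam (k : (j : Fin m) → Fin (d j)) (p : ℂ × ((j : Fin m) → {i // i ≠ k j} → ℂ)) :
    MultiSpace d :=
  WithLp.toLp 2 fun l => p.1 * ∏ j, if h : l j = k j then 1 else p.2 j ⟨l j, h⟩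

theorem contDiff_coneParam (k : (j : Fin m) → Fin (d j)) : ContDiff ℝ 1 (coneParam k) := by
  rw [contDiff_piLp]
  intro l
  unfold coneParam
  refine contDiff_fst.mul (contDiff_prod fun j _ => ?_)
  split_ifs with h
  · exact contDiff_const
  · have h₁ : ContDiff ℝ 1 fun p : ℂ × ((j : Fin m) → {i // i ≠ k j} → ℂ) => p.2 j :=
      (ContinuousLinearMap.proj (R := ℝ) (φ := fun j => {i // i ≠ k j} → ℂ) j).contDiff.comp
        contDiff_snd
    exact contDiff_pi.1 h₁ ⟨l j, h⟩

/-- The charts `coneParam k` cover all product vectors, including zero. -/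
theorem exists_coneParam (hd : ∀ j, 0 < d j) (v : (j : Fin m) → EuclideanSpace ℂ (Fin (d j))) :
    ∃ k p, coneParam k p = WithLp.toLp 2 fun l : (j : Fin m) → Fin (d j) => ∏ j, v j (l j) := by
  by_cases h : ∃ j, v j = 0
  · obtain ⟨j, hj⟩ := h
    refine ⟨fun j => ⟨0, hd j⟩, 0, ?_⟩
    ext l
    simp [coneParam, Finset.prod_eq_zero (Finset.mem_univ j), hj]
  · push Not at h
    have h' : ∀ j, ∃ i, v j i ≠ 0 := fun j => by
      by_contra! hc
      exact h j (PiLp.ext hc)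
    choose k hk using h'
    refine ⟨k, ⟨∏ j, v j (k j), fun j i => v j i / v j (k j)⟩, ?_⟩
    ext l
    simp only [coneParam, ← Finset.prod_mul_distrib]
    refine Finset.prod_congr rfl fun j _ => ?_
    split_ifs with hl
    · rw [hl, mul_one]
    · field_simp [hk j]

/-- Parametrizes the `s`-tuples `X` for which some combination `∑ c i • X i` with `c i₀ = 1` lies in
the chart `k` of the product cone. The parameters are the coefficients `c i` and vectors `X i` for
`i ≠ i₀`, together with a point of the chart; `X i₀` is then determined. -/
def tupleParam (i₀ : Fin s) (k : (j : Fin m) → Fin (d j))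
    (p : (({i // i ≠ i₀} → ℂ) × ({i // i ≠ i₀} → MultiSpace d)) ×
      (ℂ × ((j : Fin m) → {i // i ≠ k j} → ℂ))) : Fin s → MultiSpace d :=
  fun i => if h : i = i₀ then coneParam k p.2 - ∑ i', p.1.1 i' • p.1.2 i' else p.1.2 ⟨i, h⟩

theorem contDiff_tupleParam (i₀ : Fin s) (k : (j : Fin m) → Fin (d j)) :
    ContDiff ℝ 1 (tupleParam i₀ k) := by
  rw [contDiff_pi]
  intro i
  unfold tupleParam
  split_ifs with h
  · have := contDiff_coneParam k
    fun_prop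
  · fun_prop

variable (d s) in
/-- The `s`-tuples of vectors having a nontrivial combination in the product cone, zero included
(so every linearly dependent tuple belongs to it when all `d j` are positive). -/
def badTuples : Set (Fin s → MultiSpace d) :=
  ⋃ (i₀ : Fin s) (k : (j : Fin m) → Fin (d j)), Set.range (tupleParam i₀ k)

theorem mem_badTuples (hd : ∀ j, 0 < d j) (X : Fin s → MultiSpace d) (c : Fin s → ℂ) (hc : c ≠ 0)
    (v : (j : Fin m) → EuclideanSpace ℂ (Fin (d j)))
    (h : ∀ l, (∑ i, c i • X i) l = ∏ j, v j (l j)) : X ∈ badTuples d s := by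
  obtain ⟨i₀, hi₀⟩ := Function.ne_iff.1 hc
  simp only [Pi.zero_apply] at hi₀
  obtain ⟨k, p, hp⟩ := exists_coneParam hd v
  have hp' : coneParam k p = ∑ i, c i • X i := hp.trans (PiLp.ext fun l => (h l).symm)
  simp only [badTuples, Set.mem_iUnion]
  -- Rescale the combination so that its coefficient at `i₀` becomes `1`.
  refine ⟨i₀, k, ⟨⟨fun i => (c i₀)⁻¹ * c i, fun i => X i⟩, ⟨(c i₀)⁻¹ * p.1, p.2⟩⟩, ?_⟩
  have hs : coneParam k ⟨(c i₀)⁻¹ * p.1, p.2⟩ = (c i₀)⁻¹ • coneParam k p := by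
    ext l; simp [coneParam, mul_assoc]
  funext i
  unfold tupleParam
  split_ifs with hi
  · subst hi
    rw [hs, hp', ← Finset.add_sum_erase _ _ (Finset.mem_univ i), smul_add, Finset.smul_sum]
    have : ∑ x ∈ Finset.univ.erase i, (c i)⁻¹ • c x • X x
        = ∑ x : {x // x ≠ i}, ((c i)⁻¹ * c x) • X x := by
      rw [← Finset.sum_subtype (Finset.univ.erase i) (p := fun x => x ≠ i) (by simp)
        (fun x => ((c i)⁻¹ * c x) • X x)]
      simp [mul_smul]
    rw [this, smul_smul, inv_mul_cancel₀ hi₀, one_smul, add_sub_cancel_right]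
  · rfl

theorem measurableSet_badTuples : MeasurableSet (badTuples d s) := by
  refine MeasurableSet.iUnion fun i₀ => MeasurableSet.iUnion fun k => ?_
  obtain ⟨K, hK, hK'⟩ := isSigmaCompact_range (contDiff_tupleParam i₀ k).continuous
  rw [← hK']
  exact MeasurableSet.iUnion fun n => (hK n).measurableSet

theorem finrank_multiSpace : Module.finrank ℝ (MultiSpace d) = 2 * ∏ j, d j := by
  rw [finrank_real_of_complex]; simp

/-- The real dimension count: each parametrization has
`2 (s - 1) + 2 (s - 1) D + 2 + 2 ∑ (d j - 1)` parameters, which is less than `2 s D` exactly when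
`s + ∑ (d j - 1) < D`. -/
theorem dimH_badTuples_lt (hd : ∀ j, 0 < d j)
    (hs : (s : ℤ) ≤ (∏ j, d j : ℕ) - ∑ j, ((d j : ℤ) - 1) - 1) (hs0 : 0 < s) :
    dimH (badTuples d s) < Module.finrank ℝ (Fin s → MultiSpace d) := by
  have key : ∀ (i₀ : Fin s) (k : (j : Fin m) → Fin (d j)), dimH (Set.range (tupleParam i₀ k)) ≤
      ((2 * (s - 1) + (s - 1) * (2 * ∏ j, d j) + 2 + 2 * ∑ j, (d j - 1) : ℕ) : ENNReal) := by
    intro i₀ k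
    refine (contDiff_tupleParam i₀ k).dimH_range_le.trans ?_
    refine Nat.cast_le.2 (le_of_eq ?_)
    simp only [Module.finrank_prod, Module.finrank_pi_fintype, finrank_multiSpace,
      Complex.finrank_real_complex]
    simp [Finset.mul_sum, Fintype.card_subtype_compl]
    ring_nf
  refine lt_of_le_of_lt
    (b := ((2 * (s - 1) + (s - 1) * (2 * ∏ j, d j) + 2 + 2 * ∑ j, (d j - 1) : ℕ) : ENNReal))
    ?_ (Nat.cast_lt.2 ?_)
  · simp only [badTuples, dimH_iUnion]
    exact iSup_le fun i₀ => iSup_le fun k => key i₀ k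
  · simp only [Module.finrank_pi_fintype, finrank_multiSpace]
    obtain ⟨t, rfl⟩ : ∃ t, s = t + 1 := ⟨s - 1, by omega⟩
    have : ∑ j, ((d j : ℤ) - 1) = ((∑ j, (d j - 1) : ℕ) : ℤ) := by
      push_cast
      exact Finset.sum_congr rfl fun j _ => by have := hd j; omega
    rw [this] at hs
    simp
    push_cast at hs ⊢
    zify
    nlinarith

/-- Some unitary carries `S₀` into the span of any given `s` linearly independent vectors. -/
theorem exists_unitary_map_le (S₀ : Submodule ℂ (MultiSpace d)) (hS₀ : Module.finrank ℂ S₀ = s)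
    (X : Fin s → MultiSpace d) (hX : LinearIndependent ℂ X) :
    ∃ V : Matrix.unitaryGroup ((j : Fin m) → Fin (d j)) ℂ, ∀ φ ∈ S₀,
      Matrix.toEuclideanLin V.1 φ ∈ Submodule.span ℂ (Set.range X) := by
  set S := Submodule.span ℂ (Set.range X)
  have hS : Module.finrank ℂ S = s := by simpa using finrank_span_eq_card hX
  let e : S₀ ≃ₗᵢ[ℂ] S := (stdOrthonormalBasis ℂ S₀).equiv (stdOrthonormalBasis ℂ S)
    (finCongr (hS₀.trans hS.symm))
  let L : MultiSpace d →ₗᵢ[ℂ] MultiSpace d := (S.subtypeₗᵢ.comp e.toLinearIsometry).extend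
  let M := Matrix.toEuclideanLin.symm L.toLinearMap
  have hM : ∀ x, Matrix.toEuclideanLin M x = L x := fun x => by
    simp [M]
  refine ⟨⟨M, Matrix.mem_unitaryGroup_iff'.2 ?_⟩, fun φ hφ => ?_⟩
  · apply Matrix.toEuclideanLin.injective
    refine LinearMap.ext fun x => ext_inner_right ℂ fun y => ?_
    have hmul : Matrix.toEuclideanLin (star M * M) x =
        Matrix.toEuclideanLin (star M) (Matrix.toEuclideanLin M x) := by
      simp [Matrix.toLpLin_apply, Matrix.mulVec_mulVec]
    rw [hmul, Matrix.star_eq_conjTranspose, Matrix.toEuclideanLin_conjTranspose_eq_adjoint,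
      LinearMap.adjoint_inner_left, hM, hM, L.inner_map_map]
    simp
  · have : L φ = e ⟨φ, hφ⟩ :=
      LinearIsometry.extend_apply (S.subtypeₗᵢ.comp e.toLinearIsometry) ⟨φ, hφ⟩
    rw [hM, this]
    exact (e _).2

/-- For an invertible `A`, almost every tuple `X` is such that `A X` is not bad. The Hausdorff
measure in the top dimension serves as Lebesgue measure. -/
theorem ae_comp_notMem_badTuples (hd : ∀ j, 0 < d j)
    (hs : (s : ℤ) ≤ (∏ j, d j : ℕ) - ∑ j, ((d j : ℤ) - 1) - 1) (hs0 : 0 < s)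
    (A B : MultiSpace d →ₗ[ℂ] MultiSpace d)
    (h : ∀ x, B (A x) = x) :
    ∀ᵐ X ∂(μH[Module.finrank ℝ (Fin s → MultiSpace d)] : Measure (Fin s → MultiSpace d)),
      (fun i => A (X i)) ∉ badTuples d s := by
  have hB := (LinearMap.toContinuousLinearMap (B.compLeft (Fin s))).lipschitz
  rw [ae_iff]
  simp only [not_not]
  refine hausdorffMeasure_of_dimH_lt (d := (Module.finrank ℝ (Fin s → MultiSpace d) : NNReal))
    (lt_of_le_of_lt ((dimH_mono ?_).trans (hB.dimH_image_le _)) (dimH_badTuples_lt hd hs hs0))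
  intro X hX
  exact ⟨_, hX, funext fun i => h _⟩

theorem continuous_act : Continuous fun p : Matrix.unitaryGroup ((j : Fin m) → Fin (d j)) ℂ ×
    (Fin s → MultiSpace d) => fun i => Matrix.toEuclideanLin p.1.1 (p.2 i) := by
  refine continuous_pi fun i => ?_
  simp only [Matrix.toLpLin_apply]
  refine (PiLp.continuous_toLp 2 _).comp (Continuous.matrix_mulVec (by fun_prop) (by fun_prop))

theorem toEuclideanLin_star_unitary (U : Matrix.unitaryGroup ((j : Fin m) → Fin (d j)) ℂ)
    (x : MultiSpace d) : Matrix.toEuclideanLin (star U.1) (Matrix.toEuclideanLin U.1 x) = x := by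
  simp [Matrix.toLpLin_apply, Matrix.mulVec_mulVec]

theorem secondCountable_unitaryGroup :
    SecondCountableTopology (Matrix.unitaryGroup ((j : Fin m) → Fin (d j)) ℂ) :=
  have : SecondCountableTopology (Matrix ((j : Fin m) → Fin (d j)) ((j : Fin m) → Fin (d j)) ℂ) :=
    inferInstanceAs (SecondCountableTopology
      (((j : Fin m) → Fin (d j)) → ((j : Fin m) → Fin (d j)) → ℂ))
  TopologicalSpace.Subtype.secondCountableTopology _

end Aux

/-- let `s ≤ D - ∑_j (d_j - 1) - 1` and fix an `s`-dimensional
subspace `S₀` of `H`. Then for Haar-almost every unitary `U` (i.e. almost every `U`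
w.r.t. the left-invariant Borel probability measure on the unitary group of `H`),
the subspace `U(S₀)` contains no nonzero product vector. -/
theorem generic_subspace_completely_entangled {m : ℕ} (d : Fin m → ℕ) (s : ℕ)
    (hs : (s : ℤ) ≤ (∏ j, d j : ℕ) - ∑ j, ((d j : ℤ) - 1) - 1)
    (S₀ : Submodule ℂ (MultiSpace d)) (hS₀ : Module.finrank ℂ S₀ = s)
    [MeasurableSpace (Matrix.unitaryGroup ((j : Fin m) → Fin (d j)) ℂ)]
    [BorelSpace (Matrix.unitaryGroup ((j : Fin m) → Fin (d j)) ℂ)]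
    (ν : Measure (Matrix.unitaryGroup ((j : Fin m) → Fin (d j)) ℂ))
    [IsProbabilityMeasure ν]
    (hν : ∀ g : Matrix.unitaryGroup ((j : Fin m) → Fin (d j)) ℂ,
      ν.map (fun x => g * x) = ν) :
    ∀ᵐ U ∂ν, ∀ φ ∈ S₀.map (Matrix.toEuclideanLin (U.1)),
      ¬ IsProdVec d φ := by
  rcases Nat.eq_zero_or_pos s with rfl | hs0
  · rw [Submodule.finrank_eq_zero] at hS₀
    subst hS₀
    refine Filter.Eventually.of_forall fun U φ hφ h => h.1 ?_
    simpa using hφ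
  -- A local dimension `d j = 0` forces `H = 0`, contradicting `s > 0`.
  have hd : ∀ j, 0 < d j := by
    intro j
    by_contra hj
    have : IsEmpty ((j : Fin m) → Fin (d j)) :=
      ⟨fun k => by have := (k j).2; omega⟩
    have : Module.finrank ℂ S₀ = 0 := Module.finrank_zero_of_subsingleton
    omega
  have := secondCountable_unitaryGroup (d := d)
  have : ν.IsMulLeftInvariant := ⟨hν⟩
  have hFubini :
      ∀ᵐ X ∂(μH[Module.finrank ℝ (Fin s → MultiSpace d)] : Measure (Fin s → MultiSpace d)),
      ∀ᵐ U ∂ν, (fun i => Matrix.toEuclideanLin U.1 (X i)) ∉ badTuples d s := by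
    rw [Measure.ae_ae_comm]
    · exact Filter.Eventually.of_forall fun U =>
        ae_comp_notMem_badTuples hd hs hs0 _ _ (toEuclideanLin_star_unitary U)
    · exact (continuous_act.comp continuous_swap).measurable
        measurableSet_badTuples.compl
  obtain ⟨X, hX⟩ := hFubini.exists
  have hlin : LinearIndependent ℂ X := by
    obtain ⟨U, hU⟩ := hX.exists
    rw [Fintype.linearIndependent_iff]
    intro c hc
    by_contra! hne
    -- For `m = 0` the dimension bound forces `s = 0`; for `m > 0` the zero vector is a product.
    obtain ⟨j₀⟩ : Nonempty (Fin m) := by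
      by_contra hm
      rw [not_nonempty_iff] at hm
      simp at hs
      omega
    refine hU (mem_badTuples hd _ c (fun h => ?_) 0 fun l => ?_)
    · obtain ⟨i, hi⟩ := hne
      exact hi (congrFun h i)
    · simp_rw [← map_smul, ← map_sum, hc, map_zero]
      simp [Finset.prod_eq_zero (Finset.mem_univ j₀)]
  obtain ⟨V, hV⟩ := exists_unitary_map_le S₀ hS₀ X hlin
  -- Null sets of a left-invariant measure are stable under right translation, so `S₀` may be
  -- replaced by `V S₀`, which lies in the span of `X`.
  refine (measure_mul_right_null ν V).1 (measure_mono_null ?_ (ae_iff.1 hX))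
  intro U hU
  simp only [Set.mem_preimage, Set.mem_compl_iff, Set.mem_ofPred_eq, not_forall, not_not] at hU ⊢
  obtain ⟨φ, ⟨x, hx, rfl⟩, hne, v, hv⟩ := hU
  obtain ⟨c, hc⟩ := (Submodule.mem_span_range_iff_exists_fun ℂ).1 (hV x hx)
  have hUV : Matrix.toEuclideanLin (U * V).1 x =
      ∑ i, c i • Matrix.toEuclideanLin U.1 (X i) := by
    simp_rw [← map_smul, ← map_sum, hc]
    simp [Matrix.toLpLin_apply, Matrix.mulVec_mulVec]
  rw [hUV] at hne hv
  refine mem_badTuples hd _ c (fun h => hne ?_) v hv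
  simp [h]
end

section
/- Let H = H_1 ⊗ ... ⊗ H_m be a multipartite complex Hilbert space with dim H_j = d_j and D = ∏_j d_j, and set s_max = D - ∑_j (d_j - 1) - 1. Fix a subspace S_0 of H of dimension s with s > s_max + 1. Then for Haar-almost every unitary U on H, the subspace U(S_0) contains infinitely many product states, i.e. infinitely many distinct one-dimensional subspaces spanned by product vectors v_1 ⊗ ... ⊗ v_m. -/
/-!
The conclusion holds for every unitary `U`, so the measure plays no role: if all
`d j ≥ 1`, any subspace `S` with `dim S + ∑ j (d j - 1) > D` contains infinitely many product states.

The reason is dimension theory on the affine cone over the Segre variety. Its coordinate ring is the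
subring `R` of `ℂ[x_{j,i}]` generated by the monomials `∏ j, x_{j, k j}`. Write `N = ∑ j (d j - 1)`.

* The irrelevant maximal ideal `𝔪` of `R` has height at least `N + 1`: the kernels in `R` of the
  maps setting some of the variables `x_{j,i}` with `i ≠ 0` to zero give a strict chain of primes
  (`card_le_height_killIdeal`, `lt_height_irrelevant`).
* A nonzero common zero of the ideal of relations among these monomials is, up to a scalar, a
  product vector (`prod_of_relations`). If a subspace of codimension `n` contained no product
  vector, the Nullstellensatz would make `𝔪` minimal over `n` elements of `R`, hence of height at
  most `n` by Krull's height theorem. So `n ≤ N` forces a product vector (`exists_prodVec`).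
* If `S` had only finitely many product states, a hyperplane avoiding all of them would cut `S` in a
  subspace of codimension at most `N` without product vectors (`prodStatesIn_infinite`).
-/

open MeasureTheory

/-- The set of product states contained in a subspace `S`: one-dimensional
subspaces of `S` spanned by product vectors. -/
def prodStatesIn {m : ℕ} (d : Fin m → ℕ) (S : Submodule ℂ (MultiSpace d)) :
    Set (Submodule ℂ (MultiSpace d)) :=
  {p | ∃ φ : MultiSpace d, IsProdVec d φ ∧ φ ∈ S ∧ p = Submodule.span ℂ {φ}}

namespace Segre

open MvPolynomial

noncomputable section

variable {m : ℕ} (d : Fin m → ℕ)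

/-! ### The coordinate ring and its primes -/

/-- The Segre parametrization on polynomial functions: the coordinate `X k` of a tensor goes to the
monomial `∏ j, x_{j, k j}`. -/
def param : MvPolynomial ((j : Fin m) → Fin (d j)) ℂ →ₐ[ℂ]
    MvPolynomial (Σ j : Fin m, Fin (d j)) ℂ :=
  aeval fun k => ∏ j, X ⟨j, k j⟩

/-- The homogeneous coordinate ring of the Segre variety. -/
abbrev coordRing : Subalgebra ℂ (MvPolynomial (Σ j : Fin m, Fin (d j)) ℂ) := (param d).range

instance : IsNoetherianRing (coordRing d) :=
  isNoetherianRing_of_surjective _ _ (param d).rangeRestrict.toRingHom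
    (param d).rangeRestrict_surjective

/-- The substitution setting the variables in `T` to zero. -/
def kill (T : Finset (Σ j : Fin m, Fin (d j))) :
    MvPolynomial (Σ j : Fin m, Fin (d j)) ℂ →ₐ[ℂ] MvPolynomial (Σ j : Fin m, Fin (d j)) ℂ :=
  aeval fun a => if a ∈ T then 0 else X a

/-- The prime ideal of the sub-Segre cone on which the coordinates in `T` vanish. -/
def killIdeal (T : Finset (Σ j : Fin m, Fin (d j))) : Ideal (coordRing d) :=
  RingHom.ker ((kill d T).comp (coordRing d).val)

/-- The ideal of the vertex of the Segre cone. -/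
def irrelevant : Ideal (coordRing d) :=
  RingHom.ker ((aeval (0 : (Σ j : Fin m, Fin (d j)) → ℂ)).comp (coordRing d).val)

instance (T) : (killIdeal d T).IsPrime := RingHom.ker_isPrime _

instance : (irrelevant d).IsPrime := RingHom.ker_isPrime _

variable {d}

lemma param_X (k : (j : Fin m) → Fin (d j)) : param d (X k) = ∏ j, X ⟨j, k j⟩ := by
  simp [param]

lemma kill_kill {T T' : Finset (Σ j : Fin m, Fin (d j))} (h : T ⊆ T') (p) :
    kill d T' (kill d T p) = kill d T' p := by
  have : (kill d T').comp (kill d T) = kill d T' := by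
    ext1 a
    by_cases ha : a ∈ T
    · simp [kill, ha, h ha]
    · simp [kill, ha]
  exact DFunLike.congr_fun this p

lemma aeval_zero_kill (T : Finset (Σ j : Fin m, Fin (d j))) (p) :
    aeval (0 : (Σ j : Fin m, Fin (d j)) → ℂ) (kill d T p) = aeval 0 p := by
  have : (aeval (0 : (Σ j : Fin m, Fin (d j)) → ℂ)).comp (kill d T) = aeval 0 := by
    ext1 a
    by_cases ha : a ∈ T <;> simp [kill, ha]
  exact DFunLike.congr_fun this p

lemma kill_param_ne_zero {T : Finset (Σ j : Fin m, Fin (d j))} {k : (j : Fin m) → Fin (d j)}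
    (h : ∀ j, (⟨j, k j⟩ : Σ j : Fin m, Fin (d j)) ∉ T) : kill d T (param d (X k)) ≠ 0 := by
  rw [param_X, map_prod, Finset.prod_ne_zero_iff]
  intro j _
  simp [kill, h j]

/-! ### The affine cone over the Segre variety -/

/-- The relation `z_k z_{k₀} ^ m = z_{k₀} ∏ j, z_{k₀[j ↦ k j]}` among the Segre monomials. -/
lemma relation_mem_ker (k₀ k : (j : Fin m) → Fin (d j)) :
    (X k * X k₀ ^ m - X k₀ * ∏ j, X (Function.update k₀ j (k j)) :
      MvPolynomial ((j : Fin m) → Fin (d j)) ℂ) ∈ RingHom.ker (param d) := by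
  classical
  have key : ∀ j, (X ⟨j, k₀ j⟩ : MvPolynomial (Σ j : Fin m, Fin (d j)) ℂ) *
      ∏ i, X ⟨i, Function.update k₀ j (k j) i⟩ = X ⟨j, k j⟩ * ∏ i, X ⟨i, k₀ i⟩ := by
    intro j
    rw [← Finset.mul_prod_erase _ _ (Finset.mem_univ j),
      ← Finset.mul_prod_erase Finset.univ (fun i => (X ⟨i, k₀ i⟩ :
        MvPolynomial (Σ j : Fin m, Fin (d j)) ℂ)) (Finset.mem_univ j)]
    have : ∏ i ∈ Finset.univ.erase j, (X ⟨i, Function.update k₀ j (k j) i⟩ :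
        MvPolynomial (Σ j : Fin m, Fin (d j)) ℂ) = ∏ i ∈ Finset.univ.erase j, X ⟨i, k₀ i⟩ := by
      refine Finset.prod_congr rfl fun i hi => ?_
      rw [Function.update_of_ne (Finset.ne_of_mem_erase hi)]
    rw [this, Function.update_self]
    ring
  rw [RingHom.mem_ker, map_sub, map_mul, map_mul, map_pow, map_prod, sub_eq_zero]
  simp only [param_X]
  rw [← Finset.prod_mul_distrib, Finset.prod_congr rfl fun j _ => key j, Finset.prod_mul_distrib,
    Finset.prod_const, Finset.card_univ, Fintype.card_fin]

/-- Nonzero points of the affine cone cut out by the relations are multiples of product vectors. -/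
lemma prod_of_relations (x : ((j : Fin m) → Fin (d j)) → ℂ)
    (hx : ∀ p ∈ RingHom.ker (param d), aeval x p = 0) (k₀ : (j : Fin m) → Fin (d j))
    (h₀ : x k₀ ≠ 0) : IsProdVec d ((x k₀)⁻¹ • WithLp.toLp 2 x) := by
  refine ⟨?_, fun j => WithLp.toLp 2 fun i => x (Function.update k₀ j i) / x k₀, fun k => ?_⟩
  · intro h
    have := congrArg (fun φ : MultiSpace d => φ k₀) h
    simp [h₀] at this
  · have h := hx _ (relation_mem_ker k₀ k)
    simp only [map_sub, map_mul, map_pow, map_prod, aeval_X, sub_eq_zero] at h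
    simp only [PiLp.smul_apply, smul_eq_mul, Finset.prod_div_distrib, Finset.prod_const,
      Finset.card_univ, Fintype.card_fin]
    rw [eq_div_iff (pow_ne_zero _ h₀), mul_assoc, h, inv_mul_cancel_left₀ h₀]

/-- The linear form on tensors attached to a functional, as a polynomial. -/
def linForm (f : Module.Dual ℂ (MultiSpace d)) : MvPolynomial ((j : Fin m) → Fin (d j)) ℂ :=
  ∑ k, C (f (EuclideanSpace.single k 1)) * X k

lemma aeval_linForm (f : Module.Dual ℂ (MultiSpace d)) (x : ((j : Fin m) → Fin (d j)) → ℂ) :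
    aeval x (linForm f) = f (WithLp.toLp 2 x) := by
  have h : (WithLp.toLp 2 x : MultiSpace d) = ∑ k, x k • EuclideanSpace.single k (1 : ℂ) := by
    ext k
    simp [Finset.sum_apply, Pi.single_apply]
  rw [h, map_sum]
  simp [linForm, mul_comm]

lemma finrank_multiSpace : Module.finrank ℂ (MultiSpace d) = ∏ j, d j := by
  simp [MultiSpace]

/-! ### A chain of primes in the coordinate ring -/

variable [∀ j, NeZero (d j)]

variable (d) in
/-- The pairs `(j, i)` with `i ≠ 0`. -/
def nonbase : Finset (Σ j : Fin m, Fin (d j)) :=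
  Finset.univ.sigma fun _ => Finset.univ.erase 0

lemma mem_nonbase {a : Σ j : Fin m, Fin (d j)} : a ∈ nonbase d ↔ a.2 ≠ 0 := by
  simp [nonbase]

lemma card_nonbase : (nonbase d).card = ∑ j, (d j - 1) := by
  simp [nonbase, Finset.card_sigma, Finset.card_erase_of_mem]

/-- Killing one more variable `x_{j,i}` with `i ≠ 0` strictly enlarges the prime: the monomial
supported on `x_{j,i}` and the base variables of the other factors is new. -/
lemma card_le_height_killIdeal (T : Finset (Σ j : Fin m, Fin (d j))) (hT : T ⊆ nonbase d) :
    (T.card : ℕ∞) ≤ (killIdeal d T).height := by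
  classical
  induction T using Finset.induction_on with
  | empty => simp
  | insert a T ha ih =>
    have hT' : T ⊆ nonbase d := (Finset.subset_insert a T).trans hT
    have hlt : killIdeal d T < killIdeal d (insert a T) := by
      refine lt_of_le_of_ne ?_ ?_
      · intro r hr
        have hr' : kill d T r = 0 := hr
        change kill d (insert a T) r = 0
        rw [← kill_kill (Finset.subset_insert a T), hr', map_zero]
      · intro heq
        obtain ⟨j, i⟩ := a
        let k : (j : Fin m) → Fin (d j) := Function.update 0 j i
        let r : coordRing d := (param d).rangeRestrict (X k)
        have h1 : r ∈ killIdeal d (insert ⟨j, i⟩ T) := by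
          change kill d (insert ⟨j, i⟩ T) (param d (X k)) = 0
          rw [param_X, map_prod]
          refine Finset.prod_eq_zero (Finset.mem_univ j) ?_
          simp [kill, k]
        rw [← heq] at h1
        refine kill_param_ne_zero (T := T) (k := k) ?_ h1
        intro j'
        by_cases hj : j' = j
        · subst hj
          simpa [k] using ha
        · intro hmem
          exact mem_nonbase.1 (hT' hmem) (by simp [k, hj])
    rw [Finset.card_insert_of_notMem ha]
    push_cast
    exact (by gcongr; exact ih hT' :
      (T.card : ℕ∞) + 1 ≤ (killIdeal d T).height + 1).trans
        (Ideal.height_add_one_le_of_lt_of_isPrime hlt)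

/-- The chain of `card_le_height_killIdeal` extends by one more step, to the vertex of the cone. -/
lemma lt_height_irrelevant (hm : 0 < m) :
    ((∑ j, (d j - 1) : ℕ) : ℕ∞) + 1 ≤ (irrelevant d).height := by
  have hlt : killIdeal d (nonbase d) < irrelevant d := by
    refine lt_of_le_of_ne ?_ ?_
    · intro r hr
      have hr' : kill d (nonbase d) r = 0 := hr
      change aeval 0 (r : MvPolynomial (Σ j : Fin m, Fin (d j)) ℂ) = 0
      rw [← aeval_zero_kill (nonbase d), hr', map_zero]
    · intro heq
      let r : coordRing d := (param d).rangeRestrict (X 0)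
      have h1 : r ∈ irrelevant d := by
        change aeval 0 (param d (X 0)) = (0 : ℂ)
        rw [param_X, map_prod]
        exact Finset.prod_eq_zero (Finset.mem_univ ⟨0, hm⟩) (by simp)
      rw [← heq] at h1
      exact kill_param_ne_zero (T := nonbase d) (k := 0) (fun j => by simp [mem_nonbase]) h1
  rw [← card_nonbase]
  exact (by gcongr; exact card_le_height_killIdeal _ subset_rfl :
    ((nonbase d).card : ℕ∞) + 1 ≤ (killIdeal d (nonbase d)).height + 1).trans
      (Ideal.height_add_one_le_of_lt_of_isPrime hlt)

/-! ### Product vectors in subspaces of small codimension -/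

/-- At most `∑ j, (d j - 1)` linear forms have a common zero that is a product vector. -/
lemma exists_prodVec_of_forms (hm : 0 < m) {n : ℕ} (hn : n ≤ ∑ j, (d j - 1))
    (f : Fin n → Module.Dual ℂ (MultiSpace d)) :
    ∃ φ, IsProdVec d φ ∧ ∀ i, f i φ = 0 := by
  by_contra! hno
  let F := (param d).rangeRestrict
  let J : Ideal (MvPolynomial ((j : Fin m) → Fin (d j)) ℂ) :=
    RingHom.ker (param d) ⊔ Ideal.span (Set.range fun i => linForm (f i))
  have hzero : zeroLocus ℂ J ⊆ {0} := by
    intro x hx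
    by_contra hne
    obtain ⟨k₀, h₀⟩ := Function.ne_iff.1 hne
    obtain ⟨i, hi⟩ := hno _ (prod_of_relations x
      (fun p hp => hx p (Ideal.mem_sup_left hp)) k₀ h₀)
    refine hi ?_
    rw [map_smul, ← aeval_linForm,
      hx _ (Ideal.mem_sup_right (Ideal.subset_span ⟨i, rfl⟩)), smul_zero]
  have hrad : ∀ p : MvPolynomial ((j : Fin m) → Fin (d j)) ℂ, aeval 0 p = (0 : ℂ) →
      p ∈ J.radical := by
    intro p hp
    rw [← vanishingIdeal_zeroLocus_eq_radical (K := ℂ) J]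
    intro x hx
    rw [Set.mem_singleton_iff.1 (hzero hx)]
    exact hp
  -- The vertex of the parametrized cone is the origin only because `m > 0`.
  have hvertex : ∀ p, aeval (0 : (Σ j : Fin m, Fin (d j)) → ℂ) (param d p) =
      aeval (0 : ((j : Fin m) → Fin (d j)) → ℂ) p := by
    intro p
    have : (aeval (0 : (Σ j : Fin m, Fin (d j)) → ℂ)).comp (param d) = aeval 0 := by
      ext1 k
      rw [AlgHom.comp_apply, param_X, map_prod, aeval_X]
      exact Finset.prod_eq_zero (Finset.mem_univ ⟨0, hm⟩) (by simp)
    exact DFunLike.congr_fun this p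
  have hmin : irrelevant d ∈
      (Ideal.span (Set.range fun i => F (linForm (f i)))).minimalPrimes := by
    refine ⟨⟨inferInstance, ?_⟩, ?_⟩
    · rw [Ideal.span_le]
      rintro _ ⟨i, rfl⟩
      change aeval 0 (param d (linForm (f i))) = (0 : ℂ)
      rw [hvertex, aeval_linForm]
      exact map_zero (f i)
    · rintro Q ⟨hQ, hle⟩ - r hr
      obtain ⟨p, rfl⟩ := (param d).rangeRestrict_surjective r
      have hp : aeval 0 (param d p) = (0 : ℂ) := hr
      rw [hvertex] at hp
      have hJ : J ≤ Q.comap F := by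
        refine sup_le ?_ ?_
        · intro q hq
          have : F q = 0 := Subtype.ext hq
          rw [Ideal.mem_comap, this]
          exact Q.zero_mem
        · rw [Ideal.span_le]
          rintro _ ⟨i, rfl⟩
          exact hle (Ideal.subset_span ⟨i, rfl⟩)
      exact ((hQ.comap F).radical_le_iff.2 hJ) (hrad p hp)
  have h1 := Ideal.height_le_card_of_mem_minimalPrimes_span (Set.finite_range _) hmin
  have h2 : (Set.range fun i => F (linForm (f i))).ncard ≤ n := by
    rw [← Set.image_univ]
    exact (Set.ncard_image_le Set.finite_univ).trans (by simp)
  have h3 := (lt_height_irrelevant (d := d) hm).trans h1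
  norm_cast at h3
  omega

lemma exists_prodVec (hm : 0 < m) (S : Submodule ℂ (MultiSpace d))
    (hS : ∏ j, d j ≤ Module.finrank ℂ S + ∑ j, (d j - 1)) :
    ∃ φ ∈ S, IsProdVec d φ := by
  have hdim := Subspace.finrank_add_finrank_dualAnnihilator_eq S
  rw [finrank_multiSpace] at hdim
  let b := Module.finBasis ℂ S.dualAnnihilator
  obtain ⟨φ, hφ, h⟩ := exists_prodVec_of_forms hm (by omega)
    (fun i => (b i : Module.Dual ℂ (MultiSpace d)))
  refine ⟨φ, ?_, hφ⟩
  rw [← Subspace.forall_mem_dualAnnihilator_apply_eq_zero_iff]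
  intro g hg
  have e : g = ∑ i, b.repr ⟨g, hg⟩ i • (b i : Module.Dual ℂ (MultiSpace d)) := by
    have := congrArg Subtype.val (b.sum_repr ⟨g, hg⟩)
    simp only [Submodule.coe_sum, Submodule.coe_smul] at this
    exact this.symm
  calc g φ = (∑ i, b.repr ⟨g, hg⟩ i • (b i : Module.Dual ℂ (MultiSpace d))) φ :=
        congrArg (fun w : Module.Dual ℂ (MultiSpace d) => w φ) e
    _ = 0 := by simp [LinearMap.sum_apply, h]

lemma prodStatesIn_infinite (hm : 0 < m) (S : Submodule ℂ (MultiSpace d))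
    (hS : ∏ j, d j + 1 ≤ Module.finrank ℂ S + ∑ j, (d j - 1)) :
    (prodStatesIn d S).Infinite := by
  intro hfin
  have := hfin.to_subtype
  choose w hw using fun p : prodStatesIn d S => p.2
  obtain ⟨f, hf⟩ := Module.exists_dual_forall_apply_ne_zero (K := ℂ) w fun p => (hw p).1.1
  have hcut : Module.finrank ℂ S ≤ Module.finrank ℂ (S ⊓ LinearMap.ker f : Submodule ℂ _) + 1 := by
    have h1 := Submodule.finrank_sup_add_finrank_inf_eq S (LinearMap.ker f)
    have h2 := Submodule.finrank_le (S ⊔ LinearMap.ker f)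
    have h3 := f.finrank_range_add_finrank_ker
    have h4 := Submodule.finrank_le (LinearMap.range f)
    rw [Module.finrank_self] at h4
    omega
  obtain ⟨φ, hφS, hφ⟩ := exists_prodVec hm (S ⊓ LinearMap.ker f) (by omega)
  let p : prodStatesIn d S := ⟨Submodule.span ℂ {φ}, φ, hφ, hφS.1, rfl⟩
  have hmem : w p ∈ Submodule.span ℂ {φ} := by
    have h : Submodule.span ℂ {φ} = Submodule.span ℂ {w p} := (hw p).2.2
    rw [h]
    exact Submodule.mem_span_singleton_self _
  exact hf p ((Submodule.span_singleton_le_iff_mem φ (LinearMap.ker f)).2 hφS.2 hmem)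

end

end Segre

/-- fix a subspace `S₀` of dimension `s > s_max + 1`, where
`s_max = D - ∑_j (d_j - 1) - 1`. Then for Haar-almost every unitary `U`, the subspace
`U(S₀)` contains infinitely many product states (one-dimensional subspaces spanned
by product vectors). -/
theorem generic_infinitude_of_product_states {m : ℕ} (d : Fin m → ℕ) (s : ℕ)
    (hs : s > (∏ j, d j) - (∑ j, (d j - 1)) - 1 + 1)
    (S₀ : Submodule ℂ (MultiSpace d)) (hS₀ : Module.finrank ℂ S₀ = s)
    [MeasurableSpace (Matrix.unitaryGroup ((j : Fin m) → Fin (d j)) ℂ)]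
    [BorelSpace (Matrix.unitaryGroup ((j : Fin m) → Fin (d j)) ℂ)]
    (ν : Measure (Matrix.unitaryGroup ((j : Fin m) → Fin (d j)) ℂ))
    [IsProbabilityMeasure ν]
    (hν : ∀ g : Matrix.unitaryGroup ((j : Fin m) → Fin (d j)) ℂ,
      ν.map (fun x => g * x) = ν) :
    ∀ᵐ U ∂ν, (prodStatesIn d (S₀.map (Matrix.toEuclideanLin (U.1)))).Infinite := by
  refine Filter.Eventually.of_forall fun U => ?_
  have hle : s ≤ ∏ j, d j := by
    rw [← hS₀, ← Segre.finrank_multiSpace]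
    exact Submodule.finrank_le S₀
  have hd : ∀ j, NeZero (d j) := fun j => ⟨fun h => by
    have : ∏ j, d j = 0 := Finset.prod_eq_zero (Finset.mem_univ j) h
    omega⟩
  have hm : 0 < m := by
    rcases Nat.eq_zero_or_pos m with rfl | h
    · simp at hle hs
      omega
    · exact h
  have hinj : Function.Injective (Matrix.toEuclideanLin (U.1)) := by
    refine Function.LeftInverse.injective (g := Matrix.toEuclideanLin (star U.1)) fun x => ?_
    have hU : star U.1 * U.1 = 1 := Unitary.coe_star_mul_self U
    ext k
    simp [Matrix.toLpLin_apply, Matrix.mulVec_mulVec, hU]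
  apply Segre.prodStatesIn_infinite hm
  rw [← (Submodule.equivMapOfInjective _ hinj S₀).finrank_eq, hS₀]
  omega
end

section
/- Let d_1 ≤ d_2 and 1 ≤ r < d_1, and identify the bipartite Hilbert space ℂ^{d_1} ⊗ ℂ^{d_2} with the space of d_1 × d_2 complex matrices, under which the Schmidt rank of a state equals the rank of the corresponding matrix. Then there exists a linear subspace S of the d_1 × d_2 complex matrices of dimension s all of whose nonzero elements have rank strictly greater than r if and only if s ≤ (d_1 - r)(d_2 - r). -/
/-!
Let `m × n` be the size of the matrices (`m = d₁`, `n = d₂`).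

*Construction.* Each diagonal of length `ℓ > r` is filled with the values, at `ℓ` distinct nonzero
points, of a polynomial that is a monomial times a polynomial with `ℓ - r` coefficients. A nonzero such
polynomial vanishes at most `ℓ - r - 1` times, so the diagonal has at least `r + 1` nonzero entries.
If a nonzero matrix is filled this way, the rows and columns meeting the nonzero entries of its lowest
nonzero diagonal give a triangular minor of size at least `r + 1`, so the rank exceeds `r`
(`lt_rank_diagEval`). The coefficients form an `(m - r) × (n - r)` matrix, which gives the dimension.

*Upper bound.* The matrices of rank at most `r` form a cone of dimension `m n - (m - r)(n - r)`, so a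
subspace of codimension `c` meeting it only at `0` satisfies `m n - (m - r)(n - r) ≤ c`. In algebraic
terms, let `φ = genericProd` send the coordinate functions to the entries of a generic product
`(m × r) * (r × n)`, so that the zero locus of `ker φ` consists of matrices of rank at most `r`
(`exists_mem_ker_eval_ne_zero`), and let `l₁, …, l_c` be linear forms cutting out the subspace. If
`ker φ` and the `l_k` have only the zero matrix as a common zero, the Nullstellensatz puts a power of
every coordinate function in the ideal they generate. By a graded Nakayama argument the entries
of the generic product are then integral over `ℂ[φ l₁, …, φ l_c]` (`isIntegral_of_pow_mem`). But the
`m n - (m - r)(n - r)` entries in the first `r` rows or columns are algebraically independent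
(`algebraicIndependent_hook`), so there are at most `c` of them.
-/

namespace LowRank
open MvPolynomial

/-! ### Integrality from the Nullstellensatz in the graded setting -/

section Graded
variable {τ σ : Type*}

lemma homogeneousComponent_linear_mul (l q : MvPolynomial τ ℂ) (hl : l.IsHomogeneous 1) (n : ℕ) :
    homogeneousComponent (n + 1) (l * q) = l * homogeneousComponent n q := by
  induction q using MvPolynomial.induction_on' with
  | monomial a b =>
    have h0 : (monomial a b : MvPolynomial τ ℂ).IsHomogeneous a.degree := isHomogeneous_monomial b rfl
    have h1 : (l * monomial a b).IsHomogeneous (1 + a.degree) := hl.mul h0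
    rw [homogeneousComponent_of_mem h1, homogeneousComponent_of_mem h0]
    by_cases h : n = a.degree
    · simp [h, add_comm]
    · have : ¬ (n + 1 = 1 + a.degree) := by omega
      simp [h, this]
  | add p q hp hq => rw [mul_add, map_add, map_add, mul_add, hp, hq]

lemma isHomogeneous_map {φ : MvPolynomial τ ℂ →ₐ[ℂ] MvPolynomial σ ℂ}
    (hφ : ∀ p, (φ (X p)).IsHomogeneous 2) {n : ℕ} {f : MvPolynomial τ ℂ}
    (hf : f.IsHomogeneous n) : (φ f).IsHomogeneous (2 * n) := by
  have : φ f = aeval (fun p => φ (X p)) f := by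
    exact DFunLike.congr_fun (MvPolynomial.aeval_unique φ) f
  rw [this]
  exact hf.aeval _ hφ

lemma homogeneousComponent_map {φ : MvPolynomial τ ℂ →ₐ[ℂ] MvPolynomial σ ℂ}
    (hφ : ∀ p, (φ (X p)).IsHomogeneous 2) (n : ℕ) (f : MvPolynomial τ ℂ) :
    homogeneousComponent (2 * n) (φ f) = φ (homogeneousComponent n f) := by
  conv_lhs => rw [← sum_homogeneousComponent f]
  conv_rhs => rw [← sum_homogeneousComponent f]
  simp only [map_sum]
  refine Finset.sum_congr rfl fun i _ => ?_
  have h := homogeneousComponent_isHomogeneous i f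
  rw [homogeneousComponent_of_mem (isHomogeneous_map hφ h), homogeneousComponent_of_mem h]
  by_cases hi : n = i <;> simp [hi]

/-- Graded Nakayama: if a power of every variable lies in the ideal generated by `ker φ` and the linear
forms `l k`, then the image of `φ` is spanned, as a module over `ℂ[φ (l k)]`, by the images of the
monomials of bounded degree, so that its elements are integral over that algebra. -/
lemma isIntegral_of_pow_mem [Finite τ] {ι : Type*} [Fintype ι]
    (φ : MvPolynomial τ ℂ →ₐ[ℂ] MvPolynomial σ ℂ) (hφ : ∀ p, (φ (X p)).IsHomogeneous 2)
    (l : ι → MvPolynomial τ ℂ) (hl : ∀ k, (l k).IsHomogeneous 1)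
    (hpow : ∀ p, ∃ N : ℕ, X p ^ N ∈ RingHom.ker φ ⊔ Ideal.span (Set.range l)) (p : τ) :
    IsIntegral (Algebra.adjoin ℂ (Set.range fun k => φ (l k))) (φ (X p)) := by
  classical
  have := Fintype.ofFinite τ
  choose N hN using hpow
  set J := RingHom.ker φ ⊔ Ideal.span (Set.range l) with hJ
  set A := Algebra.adjoin ℂ (Set.range fun k => φ (l k)) with hA
  set K := ∑ p, N p with hK
  -- A monomial of degree above `∑ p, N p` is divisible by some `X q ^ N q`.
  have hmon : ∀ α : τ →₀ ℕ, K < α.degree → ∀ c : ℂ, monomial α c ∈ J := by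
    intro α hα c
    obtain ⟨q, hq⟩ : ∃ q, N q ≤ α q := by
      by_contra! h
      have : α.degree ≤ K := by
        rw [Finsupp.degree_eq_sum]
        exact Finset.sum_le_sum fun i _ => (h i).le
      omega
    have : monomial α c = monomial (α - Finsupp.single q (N q)) c * X q ^ N q := by
      rw [X_pow_eq_monomial, monomial_mul, mul_one, tsub_add_cancel_of_le]
      simpa using hq
    rw [this]
    exact J.mul_mem_left _ (hN q)
  let G : Set (MvPolynomial σ ℂ) :=
    Set.image (fun α : τ →₀ ℕ => φ (monomial α 1)) {α | α.degree ≤ K}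
  have hG : G.Finite := by
    refine Set.Finite.image _ ?_
    exact Finsupp.finite_of_degree_le K
  let M : Submodule A (MvPolynomial σ ℂ) := Submodule.span A G
  have key : ∀ n, ∀ f : MvPolynomial τ ℂ, f.IsHomogeneous n → φ f ∈ M := by
    intro n
    induction n with
    | zero =>
      intro f hf
      rw [f.as_sum, map_sum]
      refine Submodule.sum_mem _ fun α hα => ?_
      have hd : α.degree = 0 := by
        have := hf (mem_support_iff.mp hα)
        rwa [Finsupp.degree_eq_weight_one]
      have : monomial α (coeff α f) = coeff α f • monomial α (1 : ℂ) := by simp [smul_monomial]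
      rw [this, map_smul]
      exact Submodule.smul_of_tower_mem _ _ (Submodule.subset_span ⟨α, by simp [hd], rfl⟩)
    | succ n ih =>
      intro f hf
      have hdeg : ∀ α ∈ f.support, α.degree = n + 1 := by
        intro α hα
        have := hf (mem_support_iff.mp hα)
        rwa [Finsupp.degree_eq_weight_one]
      by_cases hn : n + 1 ≤ K
      · rw [f.as_sum, map_sum]
        refine Submodule.sum_mem _ fun α hα => ?_
        have : monomial α (coeff α f) = coeff α f • monomial α (1 : ℂ) := by simp [smul_monomial]
        rw [this, map_smul]
        exact Submodule.smul_of_tower_mem _ _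
          (Submodule.subset_span ⟨α, by simp [hdeg α hα, hn], rfl⟩)
      · have hfJ : f ∈ J := by
          rw [f.as_sum]
          exact J.sum_mem fun α hα => hmon α (by rw [hdeg α hα]; omega) _
        obtain ⟨g, hg, h, hh, hgh⟩ := Submodule.mem_sup.mp hfJ
        obtain ⟨q, hq⟩ := Ideal.mem_span_range_iff_exists_fun.mp hh
        -- The component of degree `2 (n + 1)` of `φ f = ∑ k, φ (l k) * φ (q k)` replaces each `q k` by
        -- its component of degree `n`, to which the induction hypothesis applies.
        have e1 : φ f = ∑ k, φ (l k) * φ (homogeneousComponent n (q k)) := by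
          have hg0 : φ g = 0 := hg
          have : φ f = φ (∑ k, l k * q k) := by
            rw [← hgh, map_add, hg0, zero_add, ← hq]
            simp only [mul_comm]
          have h2 := congrArg (homogeneousComponent (2 * (n + 1))) this
          rw [homogeneousComponent_eq_self (isHomogeneous_map hφ hf),
            homogeneousComponent_map hφ, map_sum] at h2
          simp only [homogeneousComponent_linear_mul _ _ (hl _), map_sum, map_mul] at h2
          exact h2
        rw [e1]
        refine Submodule.sum_mem _ fun k _ => ?_
        have hk : φ (l k) ∈ A := Algebra.subset_adjoin ⟨k, rfl⟩
        exact M.smul_mem ⟨φ (l k), hk⟩ (ih _ (homogeneousComponent_isHomogeneous n (q k)))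
  refine isIntegral_of_smul_mem_submodule M ?_ (Submodule.fg_span hG) _ ?_
  · intro hbot
    have h1 := key 0 1 (isHomogeneous_one _ _)
    rw [hbot, map_one] at h1
    exact one_ne_zero ((Submodule.mem_bot _).mp h1)
  · intro x hx
    induction hx using Submodule.span_induction with
    | mem x hx =>
      obtain ⟨α, -, rfl⟩ := hx
      have := key _ _ ((isHomogeneous_X ℂ p).mul
        (isHomogeneous_monomial (d := α) (n := α.degree) (1 : ℂ) rfl))
      rw [map_mul] at this
      simpa using this
    | zero => simp
    | add x y _ _ hx hy => rw [smul_add]; exact M.add_mem hx hy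
    | smul a x _ hx => rw [smul_comm]; exact M.smul_mem a hx

end Graded

/-! ### The upper bound on the dimension -/

section Upper

/-- The generic matrix of rank at most `r`, written as the product of a generic `m × r` matrix and a
generic `r × n` matrix: the map on coordinate rings sending the coordinate function of the entry
`(i, j)` to the `(i, j)` entry of this product. -/
noncomputable def genericProd (m n r : ℕ) : MvPolynomial (Fin m × Fin n) ℂ →ₐ[ℂ]
    MvPolynomial ((Fin m × Fin r) ⊕ (Fin r × Fin n)) ℂ :=
  aeval fun p => ∑ k, X (Sum.inl (p.1, k)) * X (Sum.inr (k, p.2))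

lemma genericProd_X {m n r : ℕ} (p : Fin m × Fin n) :
    genericProd m n r (X p) = ∑ k, X (Sum.inl (p.1, k)) * X (Sum.inr (k, p.2)) := by
  simp [genericProd]

/-- A matrix of rank greater than `r` is not a zero of `ker (genericProd m n r)`. The witness is
`det (U * Y * W)`, where `Y` is the generic matrix and `U`, `W` are constant matrices with
`U * A * W = 1` of size `r + 1`. -/
lemma exists_mem_ker_eval_ne_zero {m n r : ℕ} (A : Matrix (Fin m) (Fin n) ℂ) (hA : r < A.rank) :
    ∃ g ∈ RingHom.ker (genericProd m n r), aeval (fun p : Fin m × Fin n => A p.1 p.2) g ≠ 0 := by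
  classical
  obtain ⟨v, hv⟩ := exists_linearIndependent_of_le_finrank (R := ℂ)
    (M := LinearMap.range A.mulVecLin) (n := r + 1) hA
  choose w hw using fun k => (v k).2
  have hv' : LinearIndependent ℂ fun k => (v k : Fin m → ℂ) :=
    hv.map' (Submodule.subtype _) (Submodule.ker_subtype _)
  let W : Matrix (Fin n) (Fin (r + 1)) ℂ := Matrix.of fun j k => w k j
  have hAW : A * W = Matrix.of fun i k => (v k : Fin m → ℂ) i := by
    ext i k
    rw [Matrix.of_apply, ← hw k]
    rfl
  have hker : LinearMap.ker (A * W).mulVecLin = ⊥ := by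
    rw [Matrix.ker_mulVecLin_eq_bot_iff]
    intro x hx
    rw [hAW] at hx
    have := Fintype.linearIndependent_iff.mp hv' x (by
      rw [← hx]
      ext i
      simp [Matrix.mulVec, dotProduct, mul_comm])
    exact funext this
  obtain ⟨u, hu⟩ := LinearMap.exists_leftInverse_of_injective _ hker
  let U := LinearMap.toMatrix' u
  have hUAW : U * (A * W) = 1 := by
    have := congrArg LinearMap.toMatrix' hu
    rw [LinearMap.toMatrix'_comp, LinearMap.toMatrix'_id] at this
    rw [← this]
    congr 1
    exact (LinearMap.toMatrix'_toLin' _).symm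
  let Y : Matrix (Fin m) (Fin n) (MvPolynomial (Fin m × Fin n) ℂ) := Matrix.of fun i j => X (i, j)
  let U' : Matrix (Fin (r + 1)) (Fin m) (MvPolynomial (Fin m × Fin n) ℂ) := U.map C
  let W' : Matrix (Fin n) (Fin (r + 1)) (MvPolynomial (Fin m × Fin n) ℂ) := W.map C
  refine ⟨(U' * (Y * W')).det, ?_, ?_⟩
  · rw [RingHom.mem_ker, AlgHom.map_det]
    let E : Matrix (Fin m) (Fin r) (MvPolynomial ((Fin m × Fin r) ⊕ (Fin r × Fin n)) ℂ) :=
      Matrix.of fun i k => X (Sum.inl (i, k))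
    let F : Matrix (Fin r) (Fin n) (MvPolynomial ((Fin m × Fin r) ⊕ (Fin r × Fin n)) ℂ) :=
      Matrix.of fun k j => X (Sum.inr (k, j))
    have h : (genericProd m n r).mapMatrix (U' * (Y * W')) =
        (U.map (C : ℂ → MvPolynomial ((Fin m × Fin r) ⊕ (Fin r × Fin n)) ℂ) * E) *
          (F * W.map (C : ℂ → MvPolynomial ((Fin m × Fin r) ⊕ (Fin r × Fin n)) ℂ)) := by
      have hY : Y.map (genericProd m n r) = E * F := by
        ext i j : 2
        simp [Y, E, F, genericProd_X, Matrix.mul_apply]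
      have hC : ∀ {a b : ℕ} (V : Matrix (Fin a) (Fin b) ℂ),
          (V.map (C : ℂ → MvPolynomial (Fin m × Fin n) ℂ)).map (genericProd m n r) = V.map C := by
        intro a b V
        exact Matrix.ext fun i j => (genericProd m n r).commutes (V i j)
      rw [AlgHom.mapMatrix_apply, Matrix.map_mul, Matrix.map_mul, hC, hC, hY]
      simp only [Matrix.mul_assoc]
    rw [h]
    by_contra hne
    have h1 := Matrix.rank_of_det_ne_zero hne
    have h2 := (Matrix.rank_mul_le_left
      (U.map (C : ℂ → MvPolynomial ((Fin m × Fin r) ⊕ (Fin r × Fin n)) ℂ) * E)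
      (F * W.map (C : ℂ → MvPolynomial ((Fin m × Fin r) ⊕ (Fin r × Fin n)) ℂ))).trans
      (Matrix.rank_le_width _)
    simp at h1
    omega
  · rw [AlgHom.map_det]
    have h : (aeval (fun p : Fin m × Fin n => A p.1 p.2)).mapMatrix (U' * (Y * W')) =
        U * (A * W) := by
      have hY : Y.map (aeval (R := ℂ) (fun p : Fin m × Fin n => A p.1 p.2)) = A := by
        ext i j : 2
        simp [Y]
      have hC : ∀ {a b : ℕ} (V : Matrix (Fin a) (Fin b) ℂ),
          (V.map (C : ℂ → MvPolynomial (Fin m × Fin n) ℂ)).map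
            (aeval (R := ℂ) (fun p : Fin m × Fin n => A p.1 p.2)) = V := by
        intro a b V
        ext i j : 2
        simp
      rw [AlgHom.mapMatrix_apply, Matrix.map_mul, Matrix.map_mul, hC, hC, hY]
    rw [h, hUAW, Matrix.det_one]
    exact one_ne_zero

/-- The entries in the first `r` rows or the first `r` columns. -/
abbrev Hook (m n r : ℕ) : Type := {p : Fin m × Fin n // (p.1 : ℕ) < r ∨ (p.2 : ℕ) < r}

lemma card_hook {m n r : ℕ} (hm : r ≤ m) (hn : r ≤ n) :
    Fintype.card (Hook m n r) + (m - r) * (n - r) = m * n := by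
  classical
  have h1 := Fintype.card_subtype_compl (fun p : Fin m × Fin n => (p.1 : ℕ) < r ∨ (p.2 : ℕ) < r)
  have h3 := Fintype.card_subtype_le (fun p : Fin m × Fin n => (p.1 : ℕ) < r ∨ (p.2 : ℕ) < r)
  have h2 : Fintype.card {p : Fin m × Fin n // ¬ ((p.1 : ℕ) < r ∨ (p.2 : ℕ) < r)} =
      (m - r) * (n - r) := by
    have hcard : ∀ a : ℕ, r ≤ a → (Finset.univ.filter fun i : Fin a => ¬ (i : ℕ) < r).card = a - r := by
      intro a ha
      have h := Finset.card_filter_add_card_filter_not (s := Finset.univ) (fun i : Fin a => (i : ℕ) < r)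
      rw [Fin.card_filter_val_lt] at h
      simp at h
      simp
      omega
    rw [Fintype.card_subtype, ← hcard m hm, ← hcard n hn, ← Finset.card_product]
    congr 1
    ext p
    simp
  rw [h2] at h1
  simp only [Fintype.card_prod, Fintype.card_fin] at h1 h3
  rw [h1]
  exact Nat.add_sub_cancel' h3

/-- The hook entries of a matrix whose top left `r × r` block is invertible can be arbitrary for a matrix
of rank `r`, so a relation between them vanishes wherever the determinant of this block does not. -/
lemma algebraicIndependent_hook {m n r : ℕ} (hm : r ≤ m) (hn : r ≤ n) :
    AlgebraicIndependent ℂ fun p : Hook m n r => genericProd m n r (X (p : Fin m × Fin n)) := by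
  classical
  rw [algebraicIndependent_iff]
  intro f hf
  let ι (i j : Fin r) : Hook m n r := ⟨(Fin.castLE hm i, Fin.castLE hn j), Or.inl i.2⟩
  let T : Matrix (Fin r) (Fin r) (MvPolynomial (Hook m n r) ℂ) := Matrix.of fun i j => X (ι i j)
  have hT : T.det ≠ 0 := by
    intro h
    have := congrArg (aeval (R := ℂ) fun p : Hook m n r =>
      if (p.1.1 : ℕ) = p.1.2 then (1 : ℂ) else 0) h
    rw [AlgHom.map_det, map_zero] at this
    have h1 : (aeval (R := ℂ) fun p : Hook m n r =>
        if (p.1.1 : ℕ) = p.1.2 then (1 : ℂ) else 0).mapMatrix T = 1 := by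
      ext i j
      simp [T, ι, Matrix.one_apply, Fin.ext_iff]
    rw [h1, Matrix.det_one] at this
    exact one_ne_zero this
  refine (mul_eq_zero.mp (?_ : f * T.det = 0)).resolve_right hT
  refine MvPolynomial.funext fun v => ?_
  rw [map_mul, map_zero]
  by_cases hdet : eval v T.det = 0
  · rw [hdet, mul_zero]
  let V : Matrix (Fin r) (Fin r) ℂ := Matrix.of fun i j => v (ι i j)
  have hV : IsUnit V.det := by
    rw [RingHom.map_det] at hdet
    have : (eval v).mapMatrix T = V := by
      ext i j
      simp [T, V]
    rw [this] at hdet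
    exact isUnit_iff_ne_zero.mpr hdet
  -- With `P` the first `r` columns and `R` the first `r` rows, `P * V⁻¹ * R` has the prescribed hook
  -- entries.
  let P : Matrix (Fin m) (Fin r) ℂ := Matrix.of fun i k => v ⟨(i, Fin.castLE hn k), Or.inr k.2⟩
  let R : Matrix (Fin r) (Fin n) ℂ := Matrix.of fun k j => v ⟨(Fin.castLE hm k, j), Or.inl k.2⟩
  have hval : ∀ p : Hook m n r, (P * (V⁻¹ * R)) p.1.1 p.1.2 = v p := by
    rintro ⟨⟨i, j⟩, hij⟩
    rcases hij with hi | hj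
    · have h1 : ∀ k, P i k = V ⟨i, hi⟩ k := fun k => rfl
      calc (P * (V⁻¹ * R)) i j = (V * (V⁻¹ * R)) ⟨i, hi⟩ j := by
            simp only [Matrix.mul_apply, h1]
        _ = R ⟨i, hi⟩ j := by rw [Matrix.mul_nonsing_inv_cancel_left _ _ hV]
        _ = _ := rfl
    · have h1 : ∀ k, R k j = V k ⟨j, hj⟩ := fun k => rfl
      calc (P * (V⁻¹ * R)) i j = (P * V⁻¹ * R) i j := by rw [Matrix.mul_assoc]
        _ = (P * V⁻¹ * V) i ⟨j, hj⟩ := by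
            rw [Matrix.mul_apply, Matrix.mul_apply]
            simp only [h1]
        _ = P i ⟨j, hj⟩ := by rw [Matrix.nonsing_inv_mul_cancel_right _ _ hV]
        _ = _ := rfl
  let x : (Fin m × Fin r) ⊕ (Fin r × Fin n) → ℂ :=
    Sum.elim (fun p => P p.1 p.2) (fun p => (V⁻¹ * R) p.1 p.2)
  have h0 := congrArg (aeval x) hf
  rw [map_zero, ← AlgHom.comp_apply, comp_aeval] at h0
  have hx : (fun p : Hook m n r => aeval x (genericProd m n r (X (p : Fin m × Fin n)))) = v := by
    funext p
    rw [← hval p, genericProd_X, Matrix.mul_apply]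
    simp [x]
  have h1 : eval v f = 0 := by
    rw [← hx, ← coe_aeval_eq_eval]
    exact h0
  rw [h1, zero_mul]

lemma finrank_le {m n r : ℕ} (hm : r ≤ m) (hn : r ≤ n)
    (S : Submodule ℂ (Matrix (Fin m) (Fin n) ℂ)) (hS : ∀ A ∈ S, A ≠ 0 → r < A.rank) :
    Module.finrank ℂ S ≤ (m - r) * (n - r) := by
  classical
  have hquot := S.finrank_quotient_add_finrank
  rw [Module.finrank_matrix, Fintype.card_fin, Fintype.card_fin, Module.finrank_self, mul_one] at hquot
  let c := Module.finrank ℂ (Matrix (Fin m) (Fin n) ℂ ⧸ S)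
  let L : Matrix (Fin m) (Fin n) ℂ →ₗ[ℂ] (Fin c → ℂ) :=
    (Module.finBasis ℂ (Matrix (Fin m) (Fin n) ℂ ⧸ S)).equivFun.toLinearMap ∘ₗ S.mkQ
  have hL : ∀ A, L A = 0 → A ∈ S := by
    intro A hA
    simpa [L] using hA
  let l : Fin c → MvPolynomial (Fin m × Fin n) ℂ :=
    fun k => ∑ p : Fin m × Fin n, C (L (Matrix.single p.1 p.2 1) k) * X p
  have hl : ∀ k, (l k).IsHomogeneous 1 := by
    intro k
    refine IsHomogeneous.sum _ _ _ fun p _ => ?_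
    simpa using (isHomogeneous_C (Fin m × Fin n) (L (Matrix.single p.1 p.2 1) k)).mul
      (isHomogeneous_X ℂ p)
  have hleval : ∀ (A : Matrix (Fin m) (Fin n) ℂ) k,
      aeval (fun p : Fin m × Fin n => A p.1 p.2) (l k) = L A k := by
    intro A k
    conv_rhs => rw [Matrix.matrix_eq_sum_single A]
    simp only [l, map_sum, map_mul, aeval_X, aeval_C, Fintype.sum_prod_type, Finset.sum_apply]
    refine Finset.sum_congr rfl fun i _ => Finset.sum_congr rfl fun j _ => ?_
    have : Matrix.single i j (A i j) = A i j • Matrix.single i j (1 : ℂ) := by simp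
    rw [this, map_smul]
    simp [mul_comm]
  have hpow : ∀ p, ∃ N : ℕ, X p ^ N ∈
      RingHom.ker (genericProd m n r) ⊔ Ideal.span (Set.range l) := by
    intro p
    -- The common zeros are the matrices of rank at most `r` in `S`, hence only the zero matrix.
    change X p ∈ Ideal.radical _
    rw [← vanishingIdeal_zeroLocus_eq_radical (K := ℂ), mem_vanishingIdeal_iff]
    intro x hx
    rw [mem_zeroLocus_iff] at hx
    let A : Matrix (Fin m) (Fin n) ℂ := Matrix.of fun i j => x (i, j)
    have hAx : (fun p : Fin m × Fin n => A p.1 p.2) = x := rfl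
    have hAS : A ∈ S := by
      refine hL A (funext fun k => ?_)
      rw [← hleval, hAx]
      exact hx _ (Ideal.mem_sup_right (Ideal.subset_span ⟨k, rfl⟩))
    have hA0 : A = 0 := by
      by_contra hne
      obtain ⟨g, hg, hg'⟩ := exists_mem_ker_eval_ne_zero A (hS A hAS hne)
      exact hg' (hx g (Ideal.mem_sup_left hg))
    rw [aeval_X]
    exact congrFun (congrFun hA0 p.1) p.2
  have hint := isIntegral_of_pow_mem (genericProd m n r)
    (fun p => by
      rw [genericProd_X]
      exact IsHomogeneous.sum _ _ _ fun k _ => (isHomogeneous_X ℂ _).mul (isHomogeneous_X ℂ _))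
    l hl hpow
  have hind := algebraicIndependent_hook (m := m) (n := n) hm hn
  set y := fun p : Hook m n r => genericProd m n r (X (p : Fin m × Fin n)) with hy
  let t := Set.range fun k => genericProd m n r (l k)
  -- Comparison of ranks in the matroid of algebraic independence.
  have hcard : (Set.range y).encard ≤ t.encard := by
    have h1 : (AlgebraicIndependent.matroid ℂ
        (MvPolynomial ((Fin m × Fin r) ⊕ (Fin r × Fin n)) ℂ)).Indep (Set.range y) :=
      AlgebraicIndependent.matroid_indep_iff.mpr hind.coe_range
    have h2 : Set.range y ⊆ (AlgebraicIndependent.matroid ℂ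
        (MvPolynomial ((Fin m × Fin r) ⊕ (Fin r × Fin n)) ℂ)).closure t := by
      rw [AlgebraicIndependent.matroid_closure_eq]
      rintro _ ⟨p, rfl⟩
      exact (hint p).isAlgebraic
    have h3 := h1.encard_le_eRk_of_subset h2
    rw [Matroid.eRk_closure_eq] at h3
    exact h3.trans (Matroid.eRk_le_encard _ _)
  have hle : Fintype.card (Hook m n r) ≤ c := by
    have h1 : (Set.range y).encard = Fintype.card (Hook m n r) := by
      rw [← Set.image_univ, hind.injective.encard_image, Set.encard_univ, ENat.card_eq_coe_fintype_card]
    have h2 : t.encard ≤ c := by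
      have := Set.encard_image_le (fun k => genericProd m n r (l k)) Set.univ
      rw [Set.image_univ, Set.encard_univ, ENat.card_eq_coe_fintype_card, Fintype.card_fin] at this
      exact this
    rw [h1] at hcard
    exact_mod_cast hcard.trans h2
  have := card_hook hm hn
  change c + _ = _ at hquot
  omega

end Upper

/-! ### Subspaces filled along diagonals -/

section Lower

/-- The linear map sending an `(m - r) × (n - r)` matrix `C` to the `m × n` matrix whose diagonal of
offset `k = j - i` lists the values of the polynomial `∑ a, C a (a + k) t ^ a`, built from the diagonal of
`C` with the same offset, at the points `t = i + 1`. The offset condition `b - a = j - i` is written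
without subtraction. -/
noncomputable def diagEval (m n r : ℕ) :
    Matrix (Fin (m - r)) (Fin (n - r)) ℂ →ₗ[ℂ] Matrix (Fin m) (Fin n) ℂ where
  toFun C := Matrix.of fun i j => ∑ a : Fin (m - r), ∑ b : Fin (n - r),
    if (b : ℕ) + (i : ℕ) = a + j then C a b * ((i : ℕ) + 1 : ℂ) ^ (a : ℕ) else 0
  map_add' C D := by
    ext i j
    simp only [Matrix.of_apply, Matrix.add_apply, ← Finset.sum_add_distrib]
    refine Finset.sum_congr rfl fun a _ => Finset.sum_congr rfl fun b _ => ?_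
    split_ifs <;> ring
  map_smul' c C := by
    ext i j
    simp only [Matrix.of_apply, Matrix.smul_apply, smul_eq_mul, Finset.mul_sum, RingHom.id_apply]
    refine Finset.sum_congr rfl fun a _ => Finset.sum_congr rfl fun b _ => ?_
    split_ifs <;> ring

lemma diagEval_apply {m n r : ℕ} (C : Matrix (Fin (m - r)) (Fin (n - r)) ℂ) (i : Fin m) (j : Fin n) :
    diagEval m n r C i j = ∑ a : Fin (m - r), ∑ b : Fin (n - r),
      if (b : ℕ) + (i : ℕ) = a + j then C a b * ((i : ℕ) + 1 : ℂ) ^ (a : ℕ) else 0 :=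
  rfl

/-- The submatrix on the rows `I` and the columns `c i`, `i ∈ I`, is triangular with nonzero diagonal. -/
lemma lt_rank_of_staircase {m n r : ℕ} (A : Matrix (Fin m) (Fin n) ℂ) (I : Finset (Fin m))
    (hI : r < I.card) (c : Fin m → Fin n) (hne : ∀ i ∈ I, A i (c i) ≠ 0)
    (hz : ∀ i ∈ I, ∀ j ∈ I, j < i → A i (c j) = 0) : r < A.rank := by
  have h1 := Matrix.rank_submatrix_le A (fun i : I => (i : Fin m)) (fun i : I => c i)
  have h2 : (A.submatrix (fun i : I => (i : Fin m)) (fun i : I => c i)).det ≠ 0 := by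
    rw [Matrix.det_of_isUpperTriangular]
    · exact Finset.prod_ne_zero_iff.mpr fun i _ => hne i i.2
    · intro i j hij
      exact hz i i.2 j j.2 hij
  rw [Matrix.rank_of_det_ne_zero h2, Fintype.card_coe] at h1
  omega

lemma lt_rank_diagEval {m n r : ℕ} (hm : r < m) (C : Matrix (Fin (m - r)) (Fin (n - r)) ℂ) (hC : C ≠ 0) :
    r < (diagEval m n r C).rank := by
  classical
  -- `k` is the lowest offset of a nonzero entry of `C`, shifted by `m` to stay in `ℕ`: entries on the
  -- diagonal `k` satisfy `b + m = a + k`.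
  have hex : ∃ k : ℕ, ∃ (a : Fin (m - r)) (b : Fin (n - r)), C a b ≠ 0 ∧ (b : ℕ) + m = a + k := by
    by_contra! h
    apply hC
    ext a b
    by_contra hab
    exact h (b + m - a) a b hab (by omega)
  obtain ⟨a₀, b₀, hab, hk⟩ := Nat.find_spec hex
  have hmin := fun k' (h : k' < Nat.find hex) => Nat.find_min hex h
  set k := Nat.find hex
  have hlow : ∀ (i : Fin m) (j : Fin n), (j : ℕ) + m < i + k → diagEval m n r C i j = 0 := by
    intro i j hij
    rw [diagEval_apply]
    refine Finset.sum_eq_zero fun a _ => Finset.sum_eq_zero fun b _ => ?_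
    split_ifs with h
    · have : C a b = 0 := by
        by_contra hne
        exact hmin (b + m - a) (by omega) ⟨a, b, hne, by omega⟩
      simp [this]
    · rfl
  -- The polynomial of the diagonal `k`, divided by `t ^ (m - k)` (here `m - k` is truncated, and is the
  -- smallest row index met by the diagonal).
  let P : Polynomial ℂ := ∑ a : Fin (m - r), ∑ b : Fin (n - r),
    if (b : ℕ) + m = a + k then Polynomial.C (C a b) * Polynomial.X ^ ((a : ℕ) - (m - k)) else 0
  have hdiag : ∀ (i : Fin m) (j : Fin n), (j : ℕ) + m = i + k →
      diagEval m n r C i j = ((i : ℕ) + 1 : ℂ) ^ (m - k) * P.eval ((i : ℕ) + 1 : ℂ) := by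
    intro i j hij
    rw [diagEval_apply]
    simp only [P, Polynomial.eval_finsetSum, Finset.mul_sum]
    refine Finset.sum_congr rfl fun a _ => Finset.sum_congr rfl fun b _ => ?_
    by_cases h : (b : ℕ) + m = a + k
    · have h' : (b : ℕ) + i = a + j := by omega
      simp only [h, h', if_true, Polynomial.eval_mul, Polynomial.eval_C, Polynomial.eval_pow,
        Polynomial.eval_X]
      rw [mul_left_comm, ← pow_add]
      congr 2
      omega
    · have h' : ¬ (b : ℕ) + i = a + j := by omega
      simp [h, h']
  have hcoeff : P.coeff (a₀ - (m - k)) = C a₀ b₀ := by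
    simp only [P, Polynomial.finsetSum_coeff]
    rw [Finset.sum_eq_single a₀, Finset.sum_eq_single b₀]
    · simp [hk]
    · intro b _ hb
      rw [if_neg, Polynomial.coeff_zero]
      intro h
      exact hb (Fin.ext (by omega))
    · simp
    · intro a _ ha
      refine Finset.sum_eq_zero fun b _ => ?_
      split_ifs with h
      · rw [Polynomial.coeff_C_mul_X_pow, if_neg]
        intro h'
        exact ha (Fin.ext (by omega))
      · simp
    · simp
  have hP : P ≠ 0 := by
    intro h
    rw [h, Polynomial.coeff_zero] at hcoeff
    exact hab hcoeff.symm
  -- The rows met by the diagonal `k`.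
  let D : Finset (Fin m) := Finset.univ.filter fun i => m ≤ i + k ∧ (i : ℕ) + k < n + m
  have hDcard : D.card = min m (n + m - k) - (m - k) := by
    have : D.map Fin.valEmbedding = Finset.Ico (m - k) (min m (n + m - k)) := by
      ext x
      simp only [D, Finset.mem_map, Finset.mem_filter, Finset.mem_univ, true_and,
        Fin.valEmbedding_apply, Finset.mem_Ico]
      constructor
      · rintro ⟨i, hi, rfl⟩
        omega
      · intro hx
        exact ⟨⟨x, by omega⟩, by simp only; omega, rfl⟩
    rw [← Finset.card_map, this, Nat.card_Ico]
  have hPdeg : P.natDegree + r < D.card := by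
    have : P.natDegree ≤ D.card - r - 1 := by
      refine Polynomial.natDegree_sum_le_of_forall_le _ _ fun a _ => ?_
      refine Polynomial.natDegree_sum_le_of_forall_le _ _ fun b _ => ?_
      split_ifs with h
      · refine (Polynomial.natDegree_C_mul_X_pow_le _ _).trans ?_
        omega
      · simp
    omega
  let Z := D.filter fun i : Fin m => P.eval ((i : ℕ) + 1 : ℂ) = 0
  have hZ : Z.card ≤ P.natDegree := by
    let e : Fin m ↪ ℂ := ⟨fun i => ((i : ℕ) + 1 : ℂ), fun i j h => by
      simpa [Fin.ext_iff] using h⟩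
    rw [← Finset.card_map e]
    refine Polynomial.card_le_degree_of_subset_roots fun x hx => ?_
    obtain ⟨i, hi, rfl⟩ := Finset.mem_map.mp (Finset.mem_val.mp hx)
    rw [Polynomial.mem_roots hP]
    exact (Finset.mem_filter.mp hi).2
  have hsplit := Finset.card_filter_add_card_filter_not (s := D)
    (fun i : Fin m => P.eval ((i : ℕ) + 1 : ℂ) = 0)
  have hn : 0 < n := by omega
  let c : Fin m → Fin n := fun i => if h : i + k - m < n then ⟨i + k - m, h⟩ else ⟨0, hn⟩
  have hc : ∀ i ∈ D, (c i : ℕ) + m = i + k := by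
    intro i hi
    have := (Finset.mem_filter.mp hi).2
    have h : i + k - m < n := by omega
    simp only [c, h, dif_pos]
    omega
  refine lt_rank_of_staircase _ (D.filter fun i : Fin m => ¬ P.eval ((i : ℕ) + 1 : ℂ) = 0) ?_ c ?_ ?_
  · change Z.card + _ = _ at hsplit
    omega
  · intro i hi
    rw [Finset.mem_filter] at hi
    rw [hdiag i _ (hc i hi.1)]
    refine mul_ne_zero (pow_ne_zero _ ?_) hi.2
    exact_mod_cast Nat.succ_ne_zero i
  · intro i hi j hj hij
    apply hlow
    rw [hc j (Finset.mem_filter.mp hj).1]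
    have : (j : ℕ) < i := hij
    omega

lemma exists_of_le {m n r s : ℕ} (hm : r < m) (hs : s ≤ (m - r) * (n - r)) :
    ∃ S : Submodule ℂ (Matrix (Fin m) (Fin n) ℂ), Module.finrank ℂ S = s ∧
      ∀ A ∈ S, A ≠ 0 → r < A.rank := by
  have hinj : Function.Injective (diagEval m n r) := by
    rw [← LinearMap.ker_eq_bot, LinearMap.ker_eq_bot']
    intro C hC
    by_contra hne
    have := lt_rank_diagEval hm C hne
    rw [hC, Matrix.rank_zero] at this
    omega
  obtain ⟨v, hv⟩ := exists_linearIndependent_of_le_finrank (R := ℂ)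
    (M := Matrix (Fin (m - r)) (Fin (n - r)) ℂ) (n := s) (by simpa [Module.finrank_matrix] using hs)
  refine ⟨(Submodule.span ℂ (Set.range v)).map (diagEval m n r), ?_, ?_⟩
  · rw [Submodule.map_span, ← Set.range_comp,
      finrank_span_eq_card (hv.map' _ (LinearMap.ker_eq_bot.mpr hinj)), Fintype.card_fin]
  · rintro _ ⟨C, -, rfl⟩ hne
    exact lt_rank_diagEval hm C fun h => hne (by rw [h, map_zero])

end Lower
end LowRank

/-- Cubitt–Montanaro–Winter: identifying the bipartite space
`ℂ^{d₁} ⊗ ℂ^{d₂}` with `d₁ × d₂` complex matrices (Schmidt rank = matrix rank),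
for `d₁ ≤ d₂` and `1 ≤ r < d₁`, there exists an `s`-dimensional subspace all of
whose nonzero elements have rank `> r` if and only if `s ≤ (d₁ - r)(d₂ - r)`. -/
theorem exists_subspace_void_of_low_rank_iff (d₁ d₂ r : ℕ) (hd : d₁ ≤ d₂)
    (hr₁ : 1 ≤ r) (hr₂ : r < d₁) (s : ℕ) :
    (∃ S : Submodule ℂ (Matrix (Fin d₁) (Fin d₂) ℂ), Module.finrank ℂ S = s ∧
      ∀ A ∈ S, A ≠ 0 → r < A.rank) ↔ s ≤ (d₁ - r) * (d₂ - r) := by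
  constructor
  · rintro ⟨S, rfl, hS⟩
    exact LowRank.finrank_le hr₂.le (hr₂.le.trans hd) S hS
  · exact LowRank.exists_of_le hr₂
end

section
/- Let d_1 ≤ d_2, 1 ≤ r < d_1, and s ≤ (d_1 - r)(d_2 - r). Identify ℂ^{d_1} ⊗ ℂ^{d_2} with the space of d_1 × d_2 complex matrices (Schmidt rank = matrix rank). Fix an s-dimensional subspace S_0. Then for Haar-almost every unitary U on this d_1·d_2-dimensional complex inner product space, the subspace U(S_0) contains no nonzero element of rank ≤ r. -/
/-!
The matrices of rank `≤ r` form a cone of complex dimension `r(d₁ + d₂ - r)`: choosing `r` rows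
that span the row space, the other rows are given by an `(d₁ - r) × r` matrix of coefficients, so
the cone is the union of finitely many images of smooth maps `lowRankParam` from spaces of exactly
that dimension (`exists_lowRankParam`).

Let `s = t + 1` and let `g` be an `s`-tuple of vectors of which a nontrivial combination has rank
`≤ r`. Normalizing one coefficient to `1`, one vector of `g` is determined by the remaining `t`
vectors, the remaining `t` coefficients and a parameter of the cone. Such tuples thus lie in a
finite union of smooth images of spaces of complex dimension `t + t d₁d₂ + r(d₁ + d₂ - r)`, which is
less than `(t + 1) d₁d₂` exactly when `t + 1 ≤ (d₁ - r)(d₂ - r)`. By Hausdorff dimension they are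
Lebesgue-null (`null_of_param`), and the same holds after applying any fixed unitary to the cone
(`ae_not_meetsLowRank`).

Fubini on the product of `ν` and Lebesgue measure produces one tuple `g` such that, for `ν`-almost
every `U`, the span of `U g` avoids the cone. In particular `g` is linearly independent, so some
unitary `W` carries `S₀` onto `span g` (`exists_unitary_map`). A left-invariant probability measure
on a compact group is also right-invariant (`map_mul_right_eq`), hence `U W⁻¹` is as generic as `U`,
and `U W⁻¹ (span g) = U (S₀)`.
-/

open MeasureTheory

/-- The bipartite Hilbert space `ℂ^{d₁} ⊗ ℂ^{d₂}`, realized concretely as the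
complex Euclidean space indexed by pairs of basis indices. -/
abbrev BiSpace (d₁ d₂ : ℕ) : Type := EuclideanSpace ℂ (Fin d₁ × Fin d₂)

/-- The `d₁ × d₂` matrix `M(ψ)` of a vector `ψ` of the bipartite space; the Schmidt
rank of `ψ` is the rank of this matrix. -/
def schmidtMatrix {d₁ d₂ : ℕ} (ψ : BiSpace d₁ d₂) : Matrix (Fin d₁) (Fin d₂) ℂ :=
  Matrix.of fun i j => ψ (i, j)


/-- If the image of `f : W → E` has real codimension more than `2 t`, then almost no `(t + 1)`-tuple
in `E` has a linear combination, with `j`-th coefficient `1`, in that image. The tuples which do are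
determined by `t` vectors, `t` scalars and a point of `W`, and therefore form a set of too small
Hausdorff dimension. The Hausdorff measure in top dimension serves as Lebesgue measure. -/
theorem null_of_param {E W : Type*} [NormedAddCommGroup E] [NormedSpace ℂ E]
    [FiniteDimensional ℝ E] [MeasurableSpace E] [BorelSpace E] [NormedAddCommGroup W]
    [NormedSpace ℝ W] [FiniteDimensional ℝ W] {t : ℕ} (f : W → E) (hf : ContDiff ℝ 1 f)
    (hdim : Module.finrank ℝ W + 2 * t < Module.finrank ℝ E) (j : Fin (t + 1)) :
    Measure.hausdorffMeasure (Module.finrank ℝ (Fin (t + 1) → E) : ℝ)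
      {g : Fin (t + 1) → E | ∃ c : Fin (t + 1) → ℂ, ∃ w, c j = 1 ∧ ∑ i, c i • g i = f w} = 0 := by
  have : SecondCountableTopology E := by
    have := FiniteDimensional.proper ℝ E
    infer_instance
  let Φ : (Fin t → ℂ) × (Fin t → E) × W → (Fin (t + 1) → E) := fun x =>
    Fin.insertNth (α := fun _ => E) j (f x.2.2 - ∑ i, x.1 i • x.2.1 i) x.2.1
  have hΦ : ContDiff ℝ 1 Φ := by
    rw [contDiff_pi]
    intro i
    induction i using Fin.succAboveCases j with
    | x => simp only [Φ, Fin.insertNth_apply_same]; fun_prop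
    | p i => simp only [Φ, Fin.insertNth_apply_succAbove]; fun_prop
  have hsub : {g : Fin (t + 1) → E | ∃ c : Fin (t + 1) → ℂ, ∃ w, c j = 1 ∧
      ∑ i, c i • g i = f w} ⊆ Set.range Φ := by
    rintro g ⟨c, w, hc, h⟩
    refine ⟨(fun i => c (j.succAbove i), fun i => g (j.succAbove i), w), ?_⟩
    rw [Fin.sum_univ_succAbove _ j, hc, one_smul] at h
    have hj : f w - ∑ i, c (j.succAbove i) • g (j.succAbove i) = g j :=
      sub_eq_of_eq_add h.symm
    simp only [Φ, hj]
    exact Fin.insertNth_self_removeNth j g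
  have hlt : dimH (Set.range Φ) <
      ((Module.finrank ℝ (Fin (t + 1) → E) : NNReal) : ENNReal) := by
    refine hΦ.dimH_range_le.trans_lt ?_
    have h : Module.finrank ℝ ((Fin t → ℂ) × (Fin t → E) × W) <
        Module.finrank ℝ (Fin (t + 1) → E) := by
      simp only [Module.finrank_prod, Module.finrank_pi_fintype, Finset.sum_const,
        Complex.finrank_real_complex, Finset.card_univ, Fintype.card_fin, smul_eq_mul]
      linarith
    exact_mod_cast h
  refine measure_mono_null hsub ?_
  exact measure_zero_of_dimH_lt (μ := Measure.hausdorffMeasure _)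
    (d := (Module.finrank ℝ (Fin (t + 1) → E) : NNReal)) (by simpa using Measure.AbsolutelyContinuous.rfl) hlt

/-- The vector whose matrix has rows `p.1` in the positions of `T` and, in every other position
`i`, the combination of these rows with coefficients `p.2 i`. For `T.card = r` these are matrices of
rank `≤ r`, parametrized by `r d₂ + (d₁ - r) r` complex numbers. -/
noncomputable def lowRankParam {d₁ d₂ : ℕ} (T : Finset (Fin d₁))
    (p : (T → Fin d₂ → ℂ) × ({i // i ∉ T} → T → ℂ)) : BiSpace d₁ d₂ :=
  WithLp.toLp 2 fun ij => if h : ij.1 ∈ T then p.1 ⟨ij.1, h⟩ ij.2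
    else ∑ k, p.2 ⟨ij.1, h⟩ k * p.1 k ij.2

theorem contDiff_lowRankParam {d₁ d₂ : ℕ} (T : Finset (Fin d₁)) :
    ContDiff ℝ 1 (lowRankParam (d₂ := d₂) T) := by
  unfold lowRankParam
  refine (PiLp.contDiff_toLp (𝕜 := ℝ) (p := 2)).comp ?_
  rw [contDiff_pi]
  rintro ⟨i, k⟩
  by_cases h : i ∈ T <;> simp only [h, dite_true, dite_false] <;> fun_prop

/-- Every vector of Schmidt rank `≤ r` is parametrized by the choice of `r` positions whose rows
span the row space. -/
theorem exists_lowRankParam {d₁ d₂ r : ℕ} (hr : r ≤ d₁) (ψ : BiSpace d₁ d₂)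
    (h : (schmidtMatrix ψ).rank ≤ r) :
    ∃ T : Finset (Fin d₁), T.card = r ∧ ∃ p, lowRankParam T p = ψ := by
  classical
  obtain ⟨κ, a, ha, hspan, hli⟩ := exists_linearIndependent' ℂ (schmidtMatrix ψ).row
  have : Finite κ := Finite.of_injective a ha
  have := Fintype.ofFinite κ
  have hcard : (Finset.univ.image a).card ≤ r := by
    rw [Finset.card_image_of_injective _ ha]
    rw [Matrix.rank_eq_finrank_span_row, ← hspan, finrank_span_eq_card hli] at h
    exact h
  obtain ⟨T, hT, hTr⟩ := Finset.exists_superset_card_eq hcard (by simpa using hr)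
  refine ⟨T, hTr, ?_⟩
  -- `T` contains the positions of a basis of the row space, so its rows span every row.
  have hmem : ∀ i, ∃ z : T → ℂ, ∑ k, z k • (schmidtMatrix ψ).row k = (schmidtMatrix ψ).row i := by
    intro i
    have : (schmidtMatrix ψ).row i ∈ Submodule.span ℂ
        (Set.range fun k : T => (schmidtMatrix ψ).row k) := by
      have h1 : (schmidtMatrix ψ).row i ∈ Submodule.span ℂ
        (Set.range (schmidtMatrix ψ).row) := Submodule.subset_span ⟨i, rfl⟩
      rw [← hspan] at h1
      refine Submodule.span_mono ?_ h1
      rintro _ ⟨k, rfl⟩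
      exact ⟨⟨a k, hT (by simp)⟩, rfl⟩
    exact (Submodule.mem_span_range_iff_exists_fun ℂ).1 this
  choose z hz using hmem
  refine ⟨(fun k j => ψ (k, j), fun i => z i), ?_⟩
  ext ⟨i, j⟩
  by_cases hi : i ∈ T
  · simp [lowRankParam, hi]
  · have := congrFun (hz i) j
    simpa [lowRankParam, hi, schmidtMatrix, Finset.sum_apply] using this

/-- The unitary group is closed and its entries are bounded by `1`. -/
instance compactSpace_unitaryGroup {n : Type*} [Fintype n] [DecidableEq n] :
    CompactSpace (Matrix.unitaryGroup n ℂ) := by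
  refine isCompact_iff_compactSpace (s := {U : Matrix n n ℂ | U ∈ Matrix.unitaryGroup n ℂ}).1 ?_
  have hK : IsCompact (Set.pi Set.univ fun _ : n => Set.pi Set.univ fun _ : n =>
      Metric.closedBall (0 : ℂ) 1) :=
    isCompact_univ_pi fun _ => isCompact_univ_pi fun _ => isCompact_closedBall _ _
  refine hK.of_isClosed_subset ?_ ?_
  · change IsClosed {U : Matrix n n ℂ | U ∈ Matrix.unitaryGroup n ℂ}
    simp only [Matrix.mem_unitaryGroup_iff]
    exact isClosed_eq (by fun_prop) continuous_const
  · intro U hU i _ j _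
    simpa using entry_norm_bound_of_unitary hU i j

/-- A left-invariant probability measure on a compact group is right-invariant: its right translates
are again left-invariant probability measures, and Haar measure is unique. -/
theorem map_mul_right_eq {G : Type*} [Group G] [TopologicalSpace G] [IsTopologicalGroup G]
    [CompactSpace G] [MeasurableSpace G] [BorelSpace G] (ν : Measure G) [IsProbabilityMeasure ν]
    (hν : ∀ g : G, ν.map (fun x => g * x) = ν) (w : G) : ν.map (fun x => x * w) = ν := by
  have key : ∀ μ : Measure G, IsProbabilityMeasure μ → (∀ g : G, μ.map (fun x => g * x) = μ) →
      μ.IsHaarMeasure := by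
    intro μ _ hμ
    have : μ.IsMulLeftInvariant := ⟨hμ⟩
    exact Measure.isHaarMeasure_of_isCompact_nonempty_interior μ Set.univ isCompact_univ
      (by simp) (by simp) (by simp)
  have hm : Measurable fun x : G => x * w := (continuous_mul_const w).measurable
  have : IsProbabilityMeasure (ν.map fun x => x * w) :=
    Measure.isProbabilityMeasure_map hm.aemeasurable
  have := key ν inferInstance hν
  have := key (ν.map fun x => x * w) inferInstance (by
    intro g
    have hg : Measurable fun x : G => g * x := (continuous_const_mul g).measurable
    conv_rhs => rw [← hν g]
    rw [Measure.map_map hg hm, Measure.map_map hm hg]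
    congr 1
    funext x
    simp [mul_assoc])
  exact Measure.isHaarMeasure_eq_of_isProbabilityMeasure _ _

/-- An isometry between subspaces of equal dimension extends to a unitary of the whole space. -/
theorem exists_unitary_map {n : Type*} [Fintype n] [DecidableEq n]
    (S T : Submodule ℂ (EuclideanSpace ℂ n)) (h : Module.finrank ℂ S = Module.finrank ℂ T) :
    ∃ W : Matrix.unitaryGroup n ℂ, ∀ x ∈ S, Matrix.toEuclideanLin W.1 x ∈ T := by
  let e : S ≃ₗᵢ[ℂ] T := (stdOrthonormalBasis ℂ S).equiv (stdOrthonormalBasis ℂ T) (finCongr h)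
  let L : EuclideanSpace ℂ n →ₗᵢ[ℂ] EuclideanSpace ℂ n :=
    (T.subtypeₗᵢ.comp e.toLinearIsometry).extend
  let L' := L.toLinearIsometryEquiv rfl
  let b := EuclideanSpace.basisFun n ℂ
  refine ⟨⟨_, L'.toMatrix_mem_unitaryGroup b b⟩, fun x hx => ?_⟩
  have hL : L x = e ⟨x, hx⟩ := LinearIsometry.extend_apply _ (⟨x, hx⟩ : S)
  have : Matrix.toEuclideanLin (LinearMap.toMatrix b.toBasis b.toBasis L'.toLinearEquiv.toLinearMap) x = L x := by
    rw [Matrix.toEuclideanLin_eq_toLin_orthonormal, Matrix.toLin_toMatrix]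
    rfl
  simp only
  erw [this, hL]
  exact (e ⟨x, hx⟩).2

/-- Some linear combination of the vectors `U (g i)`, with at least one coefficient equal to `1`, has
a matrix parametrized by `lowRankParam` for some set of `r` rows. The value `0` is allowed, so linearly
dependent tuples `g` are included whenever `r ≤ d₁`. Coefficients are normalized and the cone is
parametrized because this form is both seen to be null and seen to be measurable. -/
def MeetsLowRank {d₁ d₂ : ℕ} (r : ℕ) {t : ℕ} (U : Matrix.unitaryGroup (Fin d₁ × Fin d₂) ℂ)
    (g : Fin (t + 1) → BiSpace d₁ d₂) : Prop :=
  ∃ j : Fin (t + 1), ∃ T : {T : Finset (Fin d₁) // T.card = r}, ∃ c : Fin (t + 1) → ℂ, ∃ p,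
    c j = 1 ∧ Matrix.toEuclideanLin U.1 (∑ i, c i • g i) = lowRankParam T.1 p

theorem continuous_toEuclideanLin {n : Type*} [Fintype n] [DecidableEq n] :
    Continuous fun x : Matrix.unitaryGroup n ℂ × EuclideanSpace ℂ n =>
      Matrix.toEuclideanLin x.1.1 x.2 := by
  simp only [Matrix.toLpLin_apply]
  refine (PiLp.continuous_toLp 2 _).comp ?_
  exact Continuous.matrix_mulVec (by fun_prop) (by fun_prop)

/-- The set is a finite union of projections of closed subsets of a σ-compact space, hence
σ-compact. -/
theorem measurableSet_meetsLowRank {d₁ d₂ r t : ℕ}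
    [MeasurableSpace (Matrix.unitaryGroup (Fin d₁ × Fin d₂) ℂ)]
    [BorelSpace (Matrix.unitaryGroup (Fin d₁ × Fin d₂) ℂ)] :
    MeasurableSet {x : Matrix.unitaryGroup (Fin d₁ × Fin d₂) ℂ × (Fin (t + 1) → BiSpace d₁ d₂) |
      MeetsLowRank r x.1 x.2} := by
  simp only [MeetsLowRank, Set.ofPred_exists]
  refine MeasurableSet.iUnion fun j => MeasurableSet.iUnion fun T => ?_
  have hcl : IsClosed {y : (Matrix.unitaryGroup (Fin d₁ × Fin d₂) ℂ × (Fin (t + 1) → BiSpace d₁ d₂)) ×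
        (Fin (t + 1) → ℂ) × ((T.1 → Fin d₂ → ℂ) × ({i // i ∉ T.1} → T.1 → ℂ)) | y.2.1 j = 1 ∧
      Matrix.toEuclideanLin y.1.1.1 (∑ i, y.2.1 i • y.1.2 i) = lowRankParam T.1 y.2.2} := by
    refine IsClosed.and (isClosed_eq (by fun_prop) continuous_const) (isClosed_eq ?_ ?_)
    · exact continuous_toEuclideanLin.comp
        (f := fun y : (Matrix.unitaryGroup (Fin d₁ × Fin d₂) ℂ × (Fin (t + 1) → BiSpace d₁ d₂)) ×
        (Fin (t + 1) → ℂ) × ((T.1 → Fin d₂ → ℂ) × ({i // i ∉ T.1} → T.1 → ℂ)) => (y.1.1, ∑ i, y.2.1 i • y.1.2 i)) (by fun_prop)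
    · exact (contDiff_lowRankParam T.1).continuous.comp (by fun_prop)
  obtain ⟨K, hK, hKU⟩ := (isSigmaCompact_univ.of_isClosed_subset hcl
    (Set.subset_univ _)).image (continuous_fst)
  have hmeas : MeasurableSet (⋃ n, K n) := by
    have : SecondCountableTopologyEither (Matrix.unitaryGroup (Fin d₁ × Fin d₂) ℂ)
      (Fin (t + 1) → BiSpace d₁ d₂) := inferInstance
    exact MeasurableSet.iUnion fun n => (hK n).isClosed.measurableSet
  rw [hKU] at hmeas
  convert hmeas using 1
  ext x
  simp only [Set.mem_iUnion]
  constructor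
  · rintro ⟨c, p, h⟩
    exact ⟨(x, c, p), h, rfl⟩
  · rintro ⟨⟨_, c, p⟩, h, rfl⟩
    exact ⟨c, p, h⟩

theorem toEuclideanLin_mul_apply {n : Type*} [Fintype n] [DecidableEq n] (A B : Matrix n n ℂ)
    (x : EuclideanSpace ℂ n) :
    Matrix.toEuclideanLin (A * B) x = Matrix.toEuclideanLin A (Matrix.toEuclideanLin B x) := by
  simp [Matrix.toLpLin_apply]

theorem toEuclideanLin_inv_apply {n : Type*} [Fintype n] [DecidableEq n]
    (U : Matrix.unitaryGroup n ℂ) (x : EuclideanSpace ℂ n) :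
    Matrix.toEuclideanLin (U⁻¹).1 (Matrix.toEuclideanLin U.1 x) = x := by
  rw [← toEuclideanLin_mul_apply, ← Submonoid.coe_mul, inv_mul_cancel]
  simp

/-- The dimension count: `t + r(d₁ + d₂ - r) < d₁d₂` follows from `t + 1 ≤ (d₁ - r)(d₂ - r)`. -/
theorem ae_not_meetsLowRank {d₁ d₂ r t : ℕ} (hd : d₁ ≤ d₂) (hr : r < d₁)
    (hs : t + 1 ≤ (d₁ - r) * (d₂ - r)) (U : Matrix.unitaryGroup (Fin d₁ × Fin d₂) ℂ) :
    ∀ᵐ g : Fin (t + 1) → BiSpace d₁ d₂ ∂(Measure.hausdorffMeasure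
      (Module.finrank ℝ (Fin (t + 1) → BiSpace d₁ d₂) : ℝ)), ¬ MeetsLowRank r U g := by
  simp only [MeetsLowRank, not_exists]
  rw [ae_all_iff]
  intro j
  rw [ae_all_iff]
  intro T
  -- `U v` lies in the cone iff `v` lies in its image under `U⁻¹`, parametrized by `A ∘ lowRankParam`.
  let A : BiSpace d₁ d₂ →L[ℝ] BiSpace d₁ d₂ :=
    ((Matrix.toEuclideanLin (U⁻¹).1).restrictScalars ℝ).toContinuousLinearMap
  have hdim : Module.finrank ℝ ((T.1 → Fin d₂ → ℂ) × ({i // i ∉ T.1} → T.1 → ℂ)) + 2 * t <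
      Module.finrank ℝ (BiSpace d₁ d₂) := by
    have hE : Module.finrank ℝ (BiSpace d₁ d₂) = 2 * (d₁ * d₂) := by
      rw [← Module.finrank_mul_finrank ℝ ℂ (BiSpace d₁ d₂)]
      simp
    have hc : Fintype.card {i // i ∉ T.1} = d₁ - r := by
      rw [Fintype.card_subtype_compl]
      simp [T.2]
    rw [hE]
    simp only [Module.finrank_prod, Module.finrank_pi_fintype, Finset.sum_const,
      Complex.finrank_real_complex, Finset.card_univ, Fintype.card_fin, smul_eq_mul,
      Fintype.card_coe, T.2, hc]
    obtain ⟨a, rfl⟩ := Nat.exists_eq_add_of_le hr.le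
    obtain ⟨b, rfl⟩ := Nat.exists_eq_add_of_le (hr.le.trans hd)
    simp only [Nat.add_sub_cancel_left] at hs ⊢
    nlinarith
  have := null_of_param (fun p => A (lowRankParam T.1 p))
    (A.contDiff.comp (contDiff_lowRankParam T.1)) hdim j
  refine measure_mono_null ?_ this
  intro g hg
  simp only [Set.mem_compl_iff, Set.mem_ofPred_eq, not_forall, not_not] at hg
  obtain ⟨c, p, hc, h⟩ := hg
  refine ⟨c, p, hc, ?_⟩
  rw [← h]
  exact (toEuclideanLin_inv_apply U _).symm

/-- Matrix rank is invariant under scaling, so a nonzero coefficient vector can be normalized to have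
an entry equal to `1`. -/
theorem meetsLowRank_of_rank_le {d₁ d₂ r t : ℕ} (hr : r ≤ d₁)
    {U : Matrix.unitaryGroup (Fin d₁ × Fin d₂) ℂ} {g : Fin (t + 1) → BiSpace d₁ d₂}
    (c : Fin (t + 1) → ℂ) (hc : c ≠ 0)
    (h : (schmidtMatrix (Matrix.toEuclideanLin U.1 (∑ i, c i • g i))).rank ≤ r) :
    MeetsLowRank r U g := by
  obtain ⟨j, hj⟩ := Function.ne_iff.1 hc
  have hsc : Matrix.toEuclideanLin U.1 (∑ i, ((c j)⁻¹ * c i) • g i) =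
      (c j)⁻¹ • Matrix.toEuclideanLin U.1 (∑ i, c i • g i) := by
    simp only [mul_smul, ← Finset.smul_sum, map_smul]
  have hrank : (schmidtMatrix (Matrix.toEuclideanLin U.1
      (∑ i, ((c j)⁻¹ * c i) • g i))).rank ≤ r := by
    rw [hsc]
    refine le_trans ?_ h
    have : schmidtMatrix ((c j)⁻¹ • Matrix.toEuclideanLin U.1 (∑ i, c i • g i)) =
        Matrix.diagonal (fun _ => (c j)⁻¹) *
          schmidtMatrix (Matrix.toEuclideanLin U.1 (∑ i, c i • g i)) := by
      ext a b
      exact (Matrix.diagonal_mul (fun _ : Fin d₁ => (c j)⁻¹) (schmidtMatrix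
        (Matrix.toEuclideanLin U.1 (∑ i, c i • g i))) a b).symm
    rw [this]
    exact Matrix.rank_mul_le_right _ _
  obtain ⟨T, hT, p, hp⟩ := exists_lowRankParam hr _ hrank
  exact ⟨j, ⟨T, hT⟩, fun i => (c j)⁻¹ * c i, p, inv_mul_cancel₀ hj, hp.symm⟩

/-- for `d₁ ≤ d₂`, `1 ≤ r < d₁` and `s ≤ (d₁ - r)(d₂ - r)`, fixing
an `s`-dimensional subspace `S₀`, for Haar-almost every unitary `U` the subspace
`U(S₀)` contains no nonzero element of Schmidt rank `≤ r`. -/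
theorem generic_subspace_void_of_low_rank (d₁ d₂ r s : ℕ) (hd : d₁ ≤ d₂)
    (hr₁ : 1 ≤ r) (hr₂ : r < d₁) (hs : s ≤ (d₁ - r) * (d₂ - r))
    (S₀ : Submodule ℂ (BiSpace d₁ d₂)) (hS₀ : Module.finrank ℂ S₀ = s)
    [MeasurableSpace (Matrix.unitaryGroup (Fin d₁ × Fin d₂) ℂ)]
    [BorelSpace (Matrix.unitaryGroup (Fin d₁ × Fin d₂) ℂ)]
    (ν : Measure (Matrix.unitaryGroup (Fin d₁ × Fin d₂) ℂ)) [IsProbabilityMeasure ν]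
    (hν : ∀ g : Matrix.unitaryGroup (Fin d₁ × Fin d₂) ℂ,
      ν.map (fun x => g * x) = ν) :
    ∀ᵐ U ∂ν, ∀ ψ ∈ S₀.map (Matrix.toEuclideanLin (U.1)), ψ ≠ 0 →
      r < (schmidtMatrix ψ).rank := by
  classical
  rcases s with _ | t
  · refine Filter.Eventually.of_forall fun U ψ hψ h0 => ?_
    rw [Submodule.finrank_eq_zero.1 hS₀] at hψ
    simp at hψ
    exact absurd hψ h0
  let μ : Measure (Fin (t + 1) → BiSpace d₁ d₂) :=
    Measure.hausdorffMeasure (Module.finrank ℝ (Fin (t + 1) → BiSpace d₁ d₂) : ℝ)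
  have hμ : μ.IsAddHaarMeasure := isAddHaarMeasure_hausdorffMeasure
  have h1 : ∀ᵐ U ∂ν, ∀ᵐ g ∂μ, ¬ MeetsLowRank r U g :=
    Filter.Eventually.of_forall fun U => ae_not_meetsLowRank hd hr₂ hs U
  rw [Measure.ae_ae_comm measurableSet_meetsLowRank.compl] at h1
  obtain ⟨g, hg⟩ := h1.exists
  have hli : LinearIndependent ℂ g := by
    -- A vanishing combination would be of rank `0 ≤ r` for every `U`.
    obtain ⟨U, hU⟩ := hg.exists
    rw [Fintype.linearIndependent_iff]
    intro c hc
    by_contra! hne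
    refine hU (meetsLowRank_of_rank_le hr₂.le c (Function.ne_iff.2 hne) ?_)
    rw [hc, map_zero]
    have : schmidtMatrix (0 : BiSpace d₁ d₂) = 0 := by
      ext; simp [schmidtMatrix]
    simp [this]
  obtain ⟨W, hW⟩ := exists_unitary_map S₀ (Submodule.span ℂ (Set.range g))
    (by rw [hS₀, finrank_span_eq_card hli, Fintype.card_fin])
  have h2 : ∀ᵐ U ∂ν, ¬ MeetsLowRank r (U * W⁻¹) g := by
    rw [← map_mul_right_eq ν hν W⁻¹] at hg
    exact ae_of_ae_map (continuous_mul_const W⁻¹).measurable.aemeasurable hg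
  filter_upwards [h2] with U hU ψ hψ h0
  obtain ⟨φ, hφ, rfl⟩ := hψ
  by_contra! hle
  obtain ⟨c, hc⟩ := (Submodule.mem_span_range_iff_exists_fun ℂ).1 (hW φ hφ)
  have hUφ : Matrix.toEuclideanLin (U * W⁻¹).1 (∑ i, c i • g i) = Matrix.toEuclideanLin U.1 φ := by
    rw [hc, Submonoid.coe_mul, toEuclideanLin_mul_apply, toEuclideanLin_inv_apply]
  refine hU (meetsLowRank_of_rank_le hr₂.le c ?_ (by rwa [hUφ]))
  rintro rfl
  refine h0 ?_
  rw [← hUφ]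
  simp
end

section
/- Let H = H_1 ⊗ ... ⊗ H_m be a multipartite complex Hilbert space with dim H_j = d_j, and let n ≤ 1 + ∑_j (d_j - 1). Then for almost every n-tuple (ψ_1, ..., ψ_n) of unit vectors of H (with respect to the n-fold product of the uniform rotation-invariant probability measure on the unit sphere of H), there exist product vectors φ_1, ..., φ_n of H such that for all j, k ∈ {1, ..., n}: ⟨φ_j, ψ_k⟩ = 0 if and only if j ≠ k. (By Chefles' criterion, this says the n states are unambiguously locally distinguishable.) -/
/-!
By Fubini, the assertion reduces to two facts.

*Existence.* Any `r ≤ ∑ j, (d j - 1)` linear forms on `H` have a common zero on the Segre variety of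
product vectors (`exists_common_zero`). This is the projective dimension theorem. Let `R` be the
algebra generated by the Segre monomials `∏ j, X_{j, k j}`. Contracting to `R` the primes generated
by sets of variables gives a chain which shows that the irrelevant ideal of `R` has height at least
`1 + ∑ j, (d j - 1)` (`lt_height_ker_segreZero`). By Krull's height theorem, a prime that is minimal
over `r` elements of degree one has height at most `r`, so there is such a prime strictly below the
irrelevant ideal. Since `R` is a Jacobson ring, that prime is contained in another maximal ideal,
whose residue field is `ℂ` by the Nullstellensatz. The resulting character of `R` is a nonzero
product vector, by the Segre relations.

*Null hyperplanes.* A unitarily invariant probability measure on the sphere vanishes on hyperplanes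
(`measure_sphereHyperplane_eq_zero`). All hyperplanes have the same measure, and a point of the
sphere is orthogonal to at most `dim H` of the infinitely many points of a moment curve.

Given all states except `ψ j`, choose a product vector orthogonal to them; for almost every `ψ j` it
is not orthogonal to `ψ j`. Fubini applies because the set of tuples admitting a suitable product
vector for the index `j` is a projection of a σ-compact set, hence measurable
(`measurableSet_goodTuples`).
-/

open MeasureTheory
open scoped ComplexInnerProductSpace

/-! ### The coordinate ring of the Segre variety -/

/-- The Segre monomial `∏ j, X_{j, k j}` in the variables `X_{j, i}`, `i < d j`. -/
noncomputable def segreMon {m : ℕ} (d : Fin m → ℕ) (k : (j : Fin m) → Fin (d j)) :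
    MvPolynomial ((j : Fin m) × Fin (d j)) ℂ :=
  ∏ j, MvPolynomial.X ⟨j, k j⟩

/-- The homogeneous coordinate ring of the Segre variety, realized as the subalgebra of the
polynomial ring generated by the Segre monomials. -/
noncomputable abbrev SegreRing {m : ℕ} (d : Fin m → ℕ) :
    Subalgebra ℂ (MvPolynomial ((j : Fin m) × Fin (d j)) ℂ) :=
  Algebra.adjoin ℂ (Set.range (segreMon d))

/-- The Segre monomial indexed by `k`, as an element of the Segre ring. -/
noncomputable def segreGen {m : ℕ} (d : Fin m → ℕ) (k : (j : Fin m) → Fin (d j)) :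
    SegreRing d :=
  ⟨segreMon d k, Algebra.subset_adjoin ⟨k, rfl⟩⟩

/-- The endomorphism of the polynomial ring that keeps the variables in `T` and sends all the
others to `0`. -/
noncomputable def killVars {m : ℕ} (d : Fin m → ℕ) (T : Finset ((j : Fin m) × Fin (d j))) :
    MvPolynomial ((j : Fin m) × Fin (d j)) ℂ →ₐ[ℂ] MvPolynomial ((j : Fin m) × Fin (d j)) ℂ :=
  MvPolynomial.aeval fun s => if s ∈ T then MvPolynomial.X s else 0

/-- The prime ideal of the Segre ring that is the contraction of the ideal generated by the
variables outside `T`. -/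
noncomputable def segrePrime {m : ℕ} (d : Fin m → ℕ) (T : Finset ((j : Fin m) × Fin (d j))) :
    Ideal (SegreRing d) :=
  RingHom.ker ((killVars d T).comp (SegreRing d).val)

/-- The character of the Segre ring that evaluates a polynomial at the origin. -/
noncomputable def segreZero {m : ℕ} (d : Fin m → ℕ) : SegreRing d →ₐ[ℂ] ℂ :=
  (MvPolynomial.aeval fun _ => (0 : ℂ)).comp (SegreRing d).val

instance segrePrime_isPrime {m : ℕ} (d : Fin m → ℕ) (T : Finset ((j : Fin m) × Fin (d j))) :
    (segrePrime d T).IsPrime :=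
  RingHom.ker_isPrime _

instance segreZero_ker_isPrime {m : ℕ} (d : Fin m → ℕ) :
    (RingHom.ker (segreZero d)).IsPrime :=
  RingHom.ker_isPrime _

instance segreRing_finiteType {m : ℕ} (d : Fin m → ℕ) : Algebra.FiniteType ℂ (SegreRing d) := by
  rw [← Subalgebra.fg_iff_finiteType]
  exact Subalgebra.fg_def.2 ⟨_, Set.finite_range _, rfl⟩

lemma killVars_segreMon {m : ℕ} (d : Fin m → ℕ) (T : Finset ((j : Fin m) × Fin (d j)))
    (k : (j : Fin m) → Fin (d j)) :
    killVars d T (segreMon d k) =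
      ∏ j, if (⟨j, k j⟩ : (j : Fin m) × Fin (d j)) ∈ T then MvPolynomial.X ⟨j, k j⟩ else 0 := by
  simp [killVars, segreMon]

/-- A Segre monomial lies in the contracted prime exactly when it involves a killed variable. -/
lemma segreGen_mem_segrePrime {m : ℕ} (d : Fin m → ℕ) (T : Finset ((j : Fin m) × Fin (d j)))
    (k : (j : Fin m) → Fin (d j)) :
    segreGen d k ∈ segrePrime d T ↔ ∃ j, (⟨j, k j⟩ : (j : Fin m) × Fin (d j)) ∉ T := by
  rw [segrePrime, RingHom.mem_ker]
  change killVars d T (segreMon d k) = 0 ↔ _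
  rw [killVars_segreMon, Finset.prod_eq_zero_iff]
  simp

lemma segrePrime_anti {m : ℕ} (d : Fin m → ℕ) {S T : Finset ((j : Fin m) × Fin (d j))}
    (h : S ⊆ T) : segrePrime d T ≤ segrePrime d S := by
  intro x hx
  rw [segrePrime, RingHom.mem_ker] at hx ⊢
  change killVars d T x.1 = 0 at hx
  change killVars d S x.1 = 0
  have : killVars d S = (killVars d S).comp (killVars d T) := by
    ext s : 1
    by_cases hs : s ∈ S
    · simp [killVars, hs, h hs]
    · by_cases ht : s ∈ T <;> simp [killVars, hs, ht]
  rw [this, AlgHom.comp_apply, hx, map_zero]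

lemma segrePrime_le_ker {m : ℕ} (d : Fin m → ℕ) (T : Finset ((j : Fin m) × Fin (d j))) :
    segrePrime d T ≤ RingHom.ker (segreZero d) := by
  intro x hx
  rw [segrePrime, RingHom.mem_ker] at hx
  rw [RingHom.mem_ker]
  change killVars d T x.1 = 0 at hx
  change MvPolynomial.aeval (fun _ => (0 : ℂ)) x.1 = 0
  have : (MvPolynomial.aeval fun _ => (0 : ℂ)) =
      (MvPolynomial.aeval fun _ => (0 : ℂ)).comp (killVars d T) := by
    ext s : 1
    by_cases ht : s ∈ T <;> simp [killVars, ht]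
  rw [this, AlgHom.comp_apply, hx, map_zero]

lemma segreZero_segreGen {m : ℕ} (d : Fin m → ℕ) (hm : 0 < m) (k : (j : Fin m) → Fin (d j)) :
    segreZero d (segreGen d k) = 0 := by
  change MvPolynomial.aeval (fun _ => (0 : ℂ)) (segreMon d k) = 0
  simp [segreMon, hm.ne']

/-! ### Height of the irrelevant ideal -/

/-- Restoring the killed variables one at a time gives a strictly decreasing chain of primes, as
long as every tensor factor keeps at least one variable. -/
lemma card_compl_le_height_segrePrime {m : ℕ} (d : Fin m → ℕ) (k₀ : (j : Fin m) → Fin (d j))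
    (r : ℕ) : ∀ T : Finset ((j : Fin m) × Fin (d j)),
      (∀ j, (⟨j, k₀ j⟩ : (j : Fin m) × Fin (d j)) ∈ T) → Tᶜ.card = r →
      (r : ℕ∞) ≤ (segrePrime d T).height := by
  induction r with
  | zero => simp
  | succ r ih =>
    intro T hT hr
    obtain ⟨⟨j₀, i⟩, hs⟩ : Tᶜ.Nonempty := by
      rw [← Finset.card_pos]; omega
    have hs' := Finset.mem_compl.1 hs
    have h1 := ih (insert ⟨j₀, i⟩ T) (fun j => Finset.mem_insert_of_mem (hT j)) (by
      rw [Finset.compl_insert, Finset.card_erase_of_mem hs, hr]; rfl)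
    have hlt : segrePrime d (insert ⟨j₀, i⟩ T) < segrePrime d T := by
      refine lt_of_le_of_ne (segrePrime_anti d (Finset.subset_insert _ _)) fun he => ?_
      have hin : segreGen d (Function.update k₀ j₀ i) ∈ segrePrime d T := by
        rw [segreGen_mem_segrePrime]
        exact ⟨j₀, by simpa using hs'⟩
      rw [← he, segreGen_mem_segrePrime] at hin
      obtain ⟨j, hj⟩ := hin
      apply hj
      by_cases hjj : j = j₀
      · subst hjj; simp
      · rw [Function.update_of_ne hjj]
        exact Finset.mem_insert_of_mem (hT j)
    have h2 := Ideal.height_add_one_le_of_lt_of_isPrime hlt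
    push_cast
    exact (add_le_add_left h1 1).trans h2

/-- The irrelevant ideal has height at least `1 + ∑ j, (d j - 1)`, the dimension of the affine cone
over the Segre variety. -/
lemma lt_height_ker_segreZero {m : ℕ} (d : Fin m → ℕ) (hm : 0 < m)
    (k₀ : (j : Fin m) → Fin (d j)) (r : ℕ) (hr : r + m ≤ ∑ j, d j) :
    ((r + 1 : ℕ) : ℕ∞) ≤ (RingHom.ker (segreZero d)).height := by
  classical
  let T : Finset ((j : Fin m) × Fin (d j)) := Finset.univ.image fun j => ⟨j, k₀ j⟩
  have hT : ∀ j, (⟨j, k₀ j⟩ : (j : Fin m) × Fin (d j)) ∈ T := fun j =>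
    Finset.mem_image_of_mem _ (Finset.mem_univ j)
  have hcard : T.card = m := by
    rw [Finset.card_image_of_injective _ fun a b h => (Sigma.mk.inj h).1]
    simp
  have h1 := card_compl_le_height_segrePrime d k₀ _ T hT rfl
  have h2 : r ≤ Tᶜ.card := by
    rw [Finset.card_compl, hcard, Fintype.card_sigma]
    simp only [Fintype.card_fin]
    omega
  have hlt : segrePrime d T < RingHom.ker (segreZero d) := by
    refine lt_of_le_of_ne (segrePrime_le_ker d T) fun he => ?_
    have hin : segreGen d k₀ ∈ RingHom.ker (segreZero d) := segreZero_segreGen d hm k₀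
    rw [← he, segreGen_mem_segrePrime] at hin
    obtain ⟨j, hj⟩ := hin
    exact hj (hT j)
  have h3 := Ideal.height_add_one_le_of_lt_of_isPrime hlt
  push_cast
  exact (add_le_add_left ((Nat.cast_le.2 h2).trans h1) 1).trans h3

/-! ### Linear sections of the Segre variety -/

/-- Weak Nullstellensatz: a finitely generated `ℂ`-algebra has residue field `ℂ` at each of its
maximal ideals. -/
lemma exists_character_of_isMaximal {R : Type*} [CommRing R] [Algebra ℂ R]
    [Algebra.FiniteType ℂ R] (M : Ideal R) [hM : M.IsMaximal] :
    ∃ χ : R →ₐ[ℂ] ℂ, RingHom.ker χ = M := by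
  let _ : Field (R ⧸ M) := Ideal.Quotient.field M
  have : Module.Finite ℂ (R ⧸ M) := finite_of_finite_type_of_isJacobsonRing ℂ (R ⧸ M)
  have : Algebra.IsIntegral ℂ (R ⧸ M) := Algebra.IsIntegral.of_finite ℂ (R ⧸ M)
  let e : ℂ ≃ₐ[ℂ] (R ⧸ M) := AlgEquiv.ofBijective (Algebra.ofId _ _)
    (IsAlgClosed.algebraMap_bijective_of_isIntegral (k := ℂ) (K := R ⧸ M))
  refine ⟨e.symm.toAlgHom.comp (Ideal.Quotient.mkₐ ℂ M), ?_⟩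
  ext x
  rw [RingHom.mem_ker]
  change e.symm (Ideal.Quotient.mk M x) = 0 ↔ _
  rw [EmbeddingLike.map_eq_zero_iff, Ideal.Quotient.eq_zero_iff_mem]

/-- Any `r ≤ ∑ j, (d j - 1)` linear forms have a common zero on the Segre variety. -/
lemma exists_character {m : ℕ} (d : Fin m → ℕ) (hm : 0 < m)
    (k₀ : (j : Fin m) → Fin (d j)) (r : ℕ) (hr : r + m ≤ ∑ j, d j)
    (c : Fin r → ((j : Fin m) → Fin (d j)) → ℂ) :
    ∃ χ : SegreRing d →ₐ[ℂ] ℂ, (∃ k, χ (segreGen d k) ≠ 0) ∧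
      ∀ i, ∑ k, c i k * χ (segreGen d k) = 0 := by
  classical
  have : IsNoetherianRing (SegreRing d) := Algebra.FiniteType.isNoetherianRing ℂ _
  have : IsJacobsonRing (SegreRing d) := isJacobsonRing_of_finiteType (A := ℂ)
  let f : Fin r → SegreRing d := fun i => ∑ k, c i k • segreGen d k
  have hf : ∀ (χ : SegreRing d →ₐ[ℂ] ℂ) i, χ (f i) = ∑ k, c i k * χ (segreGen d k) := by
    intro χ i
    simp [f]
  let s : Finset (SegreRing d) := Finset.univ.image f
  have hle : Ideal.span (s : Set (SegreRing d)) ≤ RingHom.ker (segreZero d) := by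
    rw [Ideal.span_le]
    intro x hx
    obtain ⟨i, -, rfl⟩ := Finset.mem_image.1 (Finset.mem_coe.1 hx)
    change segreZero d (f i) = 0
    rw [hf]
    simp [segreZero_segreGen d hm]
  obtain ⟨p, hp, hpm⟩ := Ideal.exists_minimalPrimes_le hle
  have : p.IsPrime := hp.1.1
  -- Krull's height theorem bounds the height of `p` by `r`.
  have hne : ¬ RingHom.ker (segreZero d) ≤ p := by
    intro h
    have h1 := (lt_height_ker_segreZero d hm k₀ r hr).trans
      ((Ideal.height_mono h).trans (Ideal.height_le_card_of_mem_minimalPrimes_span_finset hp))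
    have h2 : s.card ≤ r := Finset.card_image_le.trans (by simp)
    have h3 : r + 1 ≤ s.card := by exact_mod_cast h1
    omega
  -- The prime `p` lies strictly below the irrelevant ideal, so by the Jacobson property some
  -- maximal ideal over `p` differs from the irrelevant ideal.
  have hjac : p.jacobson = p := IsJacobsonRing.out ‹_› ‹p.IsPrime›.isRadical
  by_contra hcon
  apply hne
  rw [← hjac]
  refine le_sInf ?_
  rintro M ⟨hpM, hM⟩
  obtain ⟨χ, rfl⟩ := exists_character_of_isMaximal M
  have hχ : ∀ k, χ (segreGen d k) = 0 := by
    by_contra hk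
    push Not at hk
    refine hcon ⟨χ, hk, fun i => ?_⟩
    rw [← hf]
    exact hpM (hp.1.2 (Ideal.subset_span (by simp [s])))
  have : χ = segreZero d := by
    apply AlgHom.adjoin_ext
    rintro _ ⟨k, rfl⟩
    exact (hχ k).trans (segreZero_segreGen d hm k).symm
  rw [this]

/-- The Segre relations, in the form that recovers a point of the Segre variety from its
coordinates on the lines through `k₀`. -/
lemma segreGen_relation {m : ℕ} (d : Fin m → ℕ) (k₀ k : (j : Fin m) → Fin (d j)) :
    (∏ j, segreGen d (Function.update k₀ j (k j))) * segreGen d k₀ =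
      segreGen d k * segreGen d k₀ ^ m := by
  apply Subtype.ext
  push_cast
  change (∏ j, segreMon d (Function.update k₀ j (k j))) * segreMon d k₀ =
      segreMon d k * segreMon d k₀ ^ m
  simp only [segreMon]
  rw [Finset.prod_comm, ← Finset.prod_pow, ← Finset.prod_mul_distrib, ← Finset.prod_mul_distrib]
  refine Finset.prod_congr rfl fun l _ => ?_
  rw [← Finset.mul_prod_erase _ _ (Finset.mem_univ l), Function.update_self, mul_assoc]
  congr 1
  rw [Finset.prod_congr rfl (g := fun _ => MvPolynomial.X ⟨l, k₀ l⟩), Finset.prod_const,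
    ← pow_succ, Finset.card_erase_add_one (Finset.mem_univ l)]
  · simp
  · intro j hj
    rw [Function.update_of_ne (Finset.ne_of_mem_erase hj).symm]

/-- The common zero of `exists_character` in coordinates: a character of the Segre ring that is
nonzero at `segreGen d k₁` is, after rescaling by that value, a product of vectors. -/
lemma exists_common_zero {m : ℕ} (d : Fin m → ℕ) (k₀ : (j : Fin m) → Fin (d j))
    (r : ℕ) (hr : r + m ≤ ∑ j, d j)
    (c : Fin r → ((j : Fin m) → Fin (d j)) → ℂ) :
    ∃ v : (j : Fin m) → Fin (d j) → ℂ, (∃ k : (j : Fin m) → Fin (d j), ∏ j, v j (k j) ≠ 0) ∧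
      ∀ i, ∑ k : (j : Fin m) → Fin (d j), c i k * ∏ j, v j (k j) = 0 := by
  rcases Nat.eq_zero_or_pos m with rfl | hm
  · refine ⟨fun _ _ => 1, ⟨k₀, by simp⟩, fun i => ?_⟩
    have : r = 0 := by simpa using hr
    subst this
    exact i.elim0
  obtain ⟨χ, ⟨k₁, hk₁⟩, hχ⟩ := exists_character d hm k₀ r hr c
  have hv : ∀ k : (j : Fin m) → Fin (d j),
      ∏ j, χ (segreGen d (Function.update k₁ j (k j))) / χ (segreGen d k₁) =
        χ (segreGen d k) / χ (segreGen d k₁) := by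
    intro k
    have h := congrArg χ (segreGen_relation d k₁ k)
    simp only [map_mul, map_prod, map_pow] at h
    rw [Finset.prod_div_distrib, Finset.prod_const, Finset.card_univ, Fintype.card_fin]
    rw [div_eq_div_iff (pow_ne_zero _ hk₁) hk₁, h]
  refine ⟨fun j i => χ (segreGen d (Function.update k₁ j i)) / χ (segreGen d k₁),
    ⟨k₁, ?_⟩, fun i => ?_⟩
  · rw [hv, div_self hk₁]
    exact one_ne_zero
  · simp only [hv, mul_div_assoc']
    rw [← Finset.sum_div, hχ, zero_div]

/-- The product vector `v_1 ⊗ ... ⊗ v_m`. -/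
noncomputable def prodVec {m : ℕ} (d : Fin m → ℕ)
    (v : (j : Fin m) → Fin (d j) → ℂ) : MultiSpace d :=
  WithLp.toLp 2 fun k => ∏ j, v j (k j)

lemma continuous_prodVec {m : ℕ} (d : Fin m → ℕ) : Continuous (prodVec d) := by
  unfold prodVec
  fun_prop

/-- Any `r ≤ ∑ j, (d j - 1)` vectors are simultaneously orthogonal to some nonzero product
vector. -/
lemma exists_prodVec_orthogonal {m : ℕ} (d : Fin m → ℕ) (k₀ : (j : Fin m) → Fin (d j))
    (r : ℕ) (hr : r + m ≤ ∑ j, d j) (x : Fin r → MultiSpace d) :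
    ∃ v, prodVec d v ≠ 0 ∧ ∀ i, ⟪prodVec d v, x i⟫ = 0 := by
  obtain ⟨v, ⟨k, hk⟩, hv⟩ := exists_common_zero d k₀ r hr fun i k => star (x i k)
  refine ⟨v, fun h => hk ?_, fun i => ?_⟩
  · simpa [prodVec] using congrArg (fun y : MultiSpace d => y k) h
  · rw [← inner_conj_symm, map_eq_zero, PiLp.inner_apply, ← hv i]
    refine Finset.sum_congr rfl fun k _ => ?_
    simp [prodVec, mul_comm]

lemma isProdVec_prodVec {m : ℕ} (d : Fin m → ℕ) (v : (j : Fin m) → Fin (d j) → ℂ)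
    (h : prodVec d v ≠ 0) : IsProdVec d (prodVec d v) :=
  ⟨h, fun j => WithLp.toLp 2 (v j), fun _ => rfl⟩

/-! ### Hyperplanes are null for invariant measures -/

lemma continuous_sphereMap {E : Type*} [NormedAddCommGroup E] [InnerProductSpace ℂ E]
    (U : E ≃ₗᵢ[ℂ] E) : Continuous (sphereMap U) :=
  (U.continuous.comp continuous_subtype_val).subtype_mk _

/-- The unitary group acts transitively on unit vectors. -/
lemma exists_unitary_apply_eq_s10 {ι : Type*} [Fintype ι] {w w' : EuclideanSpace ℂ ι}
    (hw : ‖w‖ = 1) (hw' : ‖w'‖ = 1) :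
    ∃ U : EuclideanSpace ℂ ι ≃ₗᵢ[ℂ] EuclideanSpace ℂ ι, U w = w' := by
  classical
  have hne : w ≠ 0 := by
    rintro rfl
    simp at hw
  obtain ⟨i, -⟩ : ∃ i, w i ≠ 0 := by
    by_contra h
    push Not at h
    exact hne (by ext i; simpa using h i)
  have key : ∀ y : EuclideanSpace ℂ ι, ‖y‖ = 1 →
      ∃ b : OrthonormalBasis ι ℂ (EuclideanSpace ℂ ι), b i = y := by
    intro y hy
    have hon : Orthonormal ℂ (({i} : Set ι).domRestrict fun _ => y) := by
      refine ⟨fun _ => hy, fun a b hab => ?_⟩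
      exact absurd (Subsingleton.elim a b) hab
    obtain ⟨b, hb⟩ := hon.exists_orthonormalBasis_extension_of_card_eq (by simp)
    exact ⟨b, hb i rfl⟩
  obtain ⟨b, hb⟩ := key w hw
  obtain ⟨b', hb'⟩ := key w' hw'
  refine ⟨b.equiv b' (Equiv.refl ι), ?_⟩
  rw [← hb, OrthonormalBasis.equiv_apply_basis, Equiv.refl_apply, hb']

/-- The trace on the unit sphere of the hyperplane orthogonal to `w`. -/
def sphereHyperplane {E : Type*} [NormedAddCommGroup E] [InnerProductSpace ℂ E] (w : E) :
    Set (Metric.sphere (0 : E) 1) :=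
  {x | ⟪w, (x : E)⟫ = 0}

lemma isClosed_sphereHyperplane {E : Type*} [NormedAddCommGroup E] [InnerProductSpace ℂ E]
    (w : E) : IsClosed (sphereHyperplane w) :=
  isClosed_eq (by fun_prop) continuous_const

lemma sphereHyperplane_smul {E : Type*} [NormedAddCommGroup E] [InnerProductSpace ℂ E]
    (w : E) {c : ℂ} (hc : c ≠ 0) : sphereHyperplane (c • w) = sphereHyperplane w := by
  ext x
  simp [sphereHyperplane, hc]

/-- All hyperplanes have the same measure, by transitivity of the unitary group. -/
lemma measure_sphereHyperplane_eq {ι : Type*} [Fintype ι]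
    [MeasurableSpace (EuclideanSpace ℂ ι)] [BorelSpace (EuclideanSpace ℂ ι)]
    (μ : Measure (Metric.sphere (0 : EuclideanSpace ℂ ι) 1))
    (hinv : ∀ U : EuclideanSpace ℂ ι ≃ₗᵢ[ℂ] EuclideanSpace ℂ ι, μ.map (sphereMap U) = μ)
    {w w' : EuclideanSpace ℂ ι} (hw : w ≠ 0) (hw' : w' ≠ 0) :
    μ (sphereHyperplane w) = μ (sphereHyperplane w') := by
  have hn : ((‖w‖ : ℂ)⁻¹) ≠ 0 := by simpa using hw
  have hn' : ((‖w'‖ : ℂ)⁻¹) ≠ 0 := by simpa using hw'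
  rw [← sphereHyperplane_smul w hn, ← sphereHyperplane_smul w' hn']
  obtain ⟨U, hU⟩ := exists_unitary_apply_eq_s10 (w := (‖w‖ : ℂ)⁻¹ • w) (w' := (‖w'‖ : ℂ)⁻¹ • w')
    (norm_smul_inv_norm hw) (norm_smul_inv_norm hw')
  conv_rhs => rw [← hinv U, Measure.map_apply (continuous_sphereMap U).measurable
    (isClosed_sphereHyperplane _).measurableSet, ← hU]
  congr 1
  ext x
  simp only [sphereHyperplane, Set.mem_ofPred_eq, Set.mem_preimage, sphereMap,
    LinearIsometryEquiv.inner_map_map]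

/-- The point with parameter `t` of the moment curve, with coordinates the powers of `t` below the
cardinality of `ι`. -/
noncomputable def momentVec (ι : Type*) [Fintype ι] (t : ℕ) : EuclideanSpace ℂ ι :=
  WithLp.toLp 2 fun i => (t : ℂ) ^ (Fintype.equivFin ι i : ℕ)

/-- A nonzero vector is orthogonal to at most `card ι` points of the moment curve, since these
correspond to roots of a nonzero polynomial. -/
lemma card_momentVec_orthogonal_le {ι : Type*} [Fintype ι] (x : EuclideanSpace ℂ ι) (hx : x ≠ 0)
    (S : Finset ℕ) (hS : ∀ t ∈ S, ⟪momentVec ι t, x⟫ = 0) : S.card ≤ Fintype.card ι := by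
  let p : Polynomial ℂ := ∑ i, Polynomial.monomial (Fintype.equivFin ι i : ℕ) (x i)
  have hcoeff : ∀ i, p.coeff (Fintype.equivFin ι i : ℕ) = x i := by
    intro i
    classical
    simp only [p, Polynomial.finsetSum_coeff, Polynomial.coeff_monomial]
    rw [Finset.sum_eq_single i]
    · simp
    · intro b _ hb
      rw [if_neg]
      intro h
      exact hb ((Fintype.equivFin ι).injective (Fin.ext h))
    · simp
  have hp : p ≠ 0 := by
    intro h
    apply hx
    ext i
    rw [← hcoeff i, h]
    simp
  have hdeg : p.natDegree ≤ Fintype.card ι :=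
    Polynomial.natDegree_sum_le_of_forall_le _ _ fun i _ =>
      (Polynomial.natDegree_monomial_le _).trans (Fintype.equivFin ι i).2.le
  have hev : ∀ t : ℕ, p.eval (t : ℂ) = ⟪momentVec ι t, x⟫ := by
    intro t
    simp only [p, Polynomial.eval_finsetSum, Polynomial.eval_monomial, PiLp.inner_apply]
    refine Finset.sum_congr rfl fun i _ => ?_
    simp [momentVec]
  have hsub : (S.image fun t : ℕ => (t : ℂ)).val ⊆ p.roots := by
    intro z hz
    obtain ⟨t, ht, rfl⟩ := Finset.mem_image.1 (show z ∈ S.image _ from hz)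
    rw [Polynomial.mem_roots hp, Polynomial.IsRoot, hev, hS t ht]
  have := Polynomial.card_le_degree_of_subset_roots hsub
  rw [Finset.card_image_of_injective _ Nat.cast_injective] at this
  exact this.trans hdeg

/-- A unitarily invariant probability measure on the sphere does not charge hyperplanes: all
hyperplanes have the same measure, and each point of the sphere lies on boundedly many of the
infinitely many hyperplanes orthogonal to the moment curve. -/
lemma measure_sphereHyperplane_eq_zero {ι : Type*} [Fintype ι] [Nonempty ι]
    [MeasurableSpace (EuclideanSpace ℂ ι)] [BorelSpace (EuclideanSpace ℂ ι)]
    (μ : Measure (Metric.sphere (0 : EuclideanSpace ℂ ι) 1)) [IsProbabilityMeasure μ]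
    (hinv : ∀ U : EuclideanSpace ℂ ι ≃ₗᵢ[ℂ] EuclideanSpace ℂ ι, μ.map (sphereMap U) = μ)
    {w : EuclideanSpace ℂ ι} (hw : w ≠ 0) : μ (sphereHyperplane w) = 0 := by
  classical
  have hmom : ∀ t, momentVec ι t ≠ 0 := by
    intro t h
    -- the coordinate of exponent zero is `1`, including at `t = 0`
    have := congrArg (fun y : EuclideanSpace ℂ ι =>
      y ((Fintype.equivFin ι).symm ⟨0, Fintype.card_pos⟩)) h
    simp [momentVec] at this
  have hsum : ∀ K : ℕ, (K : ENNReal) * μ (sphereHyperplane w) ≤ Fintype.card ι := by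
    intro K
    calc (K : ENNReal) * μ (sphereHyperplane w)
        = ∑ t ∈ Finset.range K, μ (sphereHyperplane (momentVec ι t)) := by
          rw [Finset.sum_congr rfl fun t _ => measure_sphereHyperplane_eq μ hinv (hmom t) hw]
          simp
      _ = ∑ t ∈ Finset.range K, ∫⁻ x, (sphereHyperplane (momentVec ι t)).indicator 1 x ∂μ := by
          refine Finset.sum_congr rfl fun t _ => ?_
          rw [lintegral_indicator_one (isClosed_sphereHyperplane _).measurableSet]
      _ = ∫⁻ x, ∑ t ∈ Finset.range K, (sphereHyperplane (momentVec ι t)).indicator 1 x ∂μ := by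
          rw [lintegral_finsetSum]
          exact fun t _ => measurable_one.indicator (isClosed_sphereHyperplane _).measurableSet
      _ ≤ ∫⁻ _, (Fintype.card ι : ENNReal) ∂μ := by
          refine lintegral_mono fun x => ?_
          simp only [Set.indicator_apply, Pi.one_apply]
          rw [Finset.sum_boole]
          refine Nat.cast_le.2 (card_momentVec_orthogonal_le (x : EuclideanSpace ℂ ι) ?_ _ ?_)
          · exact ne_zero_of_mem_unit_sphere x
          · intro t ht
            exact (Finset.mem_filter.1 ht).2
      _ = Fintype.card ι := by simp
  by_contra hne
  obtain ⟨K, hK⟩ := ENNReal.exists_nat_mul_gt hne (ENNReal.natCast_ne_top (Fintype.card ι))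
  exact absurd (hsum K) (not_le.2 hK)

/-! ### Generic tuples -/

/-- The tuples for which some product vector is orthogonal to every member except the `j`-th. -/
def goodTuples {m : ℕ} (d : Fin m → ℕ) {n : ℕ} (j : Fin n) :
    Set (Fin n → Metric.sphere (0 : MultiSpace d) 1) :=
  {ψ | ∃ v, (∀ k, k ≠ j → ⟪prodVec d v, (ψ k : MultiSpace d)⟫ = 0) ∧
    ⟪prodVec d v, (ψ j : MultiSpace d)⟫ ≠ 0}

lemma measurableSet_of_isSigmaCompact {X : Type*} [TopologicalSpace X] [T2Space X]
    [MeasurableSpace X] [OpensMeasurableSpace X] {s : Set X} (hs : IsSigmaCompact s) :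
    MeasurableSet s := by
  obtain ⟨K, hK, rfl⟩ := hs
  exact MeasurableSet.iUnion fun n => (hK n).measurableSet

/-- The set of good tuples is the projection of a locally closed, hence σ-compact, set. -/
lemma measurableSet_goodTuples {m : ℕ} (d : Fin m → ℕ) {n : ℕ} (j : Fin n)
    [MeasurableSpace (MultiSpace d)] [BorelSpace (MultiSpace d)] :
    MeasurableSet (goodTuples d j) := by
  let X := ((j : Fin m) → Fin (d j) → ℂ) × (Fin n → Metric.sphere (0 : MultiSpace d) 1)
  have hcont : ∀ k, Continuous fun p : X => ⟪prodVec d p.1, (p.2 k : MultiSpace d)⟫ := fun k =>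
    ((continuous_prodVec d).comp continuous_fst).inner
      (continuous_subtype_val.comp ((continuous_apply k).comp continuous_snd))
  let A : Set X := {p | ∀ k, k ≠ j → ⟪prodVec d p.1, (p.2 k : MultiSpace d)⟫ = 0}
  let B : Set X := {p | ⟪prodVec d p.1, (p.2 j : MultiSpace d)⟫ ≠ 0}
  have hA : IsClosed A := by
    simp only [A, Set.ofPred_forall]
    exact isClosed_iInter fun k => isClosed_iInter fun _ => isClosed_eq (hcont k) continuous_const
  have hB : IsOpen B := isOpen_ne_fun (hcont j) continuous_const
  have hAB : IsLocallyClosed (A ∩ B) := hA.isLocallyClosed.inter hB.isLocallyClosed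
  have : LocallyCompactSpace (A ∩ B : Set X) := hAB.locallyCompactSpace
  have hσ : IsSigmaCompact (A ∩ B) := isSigmaCompact_iff_sigmaCompactSpace.2 inferInstance
  have himg : goodTuples d j = Prod.snd '' (A ∩ B) := by
    ext ψ
    constructor
    · rintro ⟨v, h1, h2⟩
      exact ⟨(v, ψ), ⟨h1, h2⟩, rfl⟩
    · rintro ⟨⟨v, ψ⟩, ⟨h1, h2⟩, rfl⟩
      exact ⟨v, h1, h2⟩
  rw [himg]
  exact measurableSet_of_isSigmaCompact (hσ.image continuous_snd)

/-- Once the other states are fixed, together with a product vector orthogonal to them, the `j`-th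
state only has to avoid one hyperplane. -/
lemma ae_mem_goodTuples {m : ℕ} (d : Fin m → ℕ) (r : ℕ) (hr : r + m ≤ ∑ j, d j)
    (k₀ : (j : Fin m) → Fin (d j))
    [MeasurableSpace (MultiSpace d)] [BorelSpace (MultiSpace d)]
    (μ : Measure (Metric.sphere (0 : MultiSpace d) 1)) [IsProbabilityMeasure μ]
    (hinv : ∀ U : MultiSpace d ≃ₗᵢ[ℂ] MultiSpace d, μ.map (sphereMap U) = μ)
    (j : Fin (r + 1)) :
    ∀ᵐ ψ ∂(Measure.pi fun _ : Fin (r + 1) => μ), ψ ∈ goodTuples d j := by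
  have hne : Nonempty ((j : Fin m) → Fin (d j)) := ⟨k₀⟩
  have hmp := (measurePreserving_piFinSuccAbove (fun _ : Fin (r + 1) => μ) j).symm
  have hmeas := (measurableSet_goodTuples d j).compl
  change (Measure.pi fun _ : Fin (r + 1) => μ) (goodTuples d j)ᶜ = 0
  rw [← hmp.measure_preimage hmeas.nullMeasurableSet,
    Measure.prod_apply_symm (hmp.measurable hmeas)]
  refine (lintegral_congr fun y => ?_).trans lintegral_zero
  obtain ⟨v, hv0, hv⟩ := exists_prodVec_orthogonal d k₀ r hr fun i => (y i : MultiSpace d)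
  refine measure_mono_null (t := sphereHyperplane (prodVec d v)) (fun x hx => ?_)
    (measure_sphereHyperplane_eq_zero μ hinv hv0)
  by_contra hxw
  have hsymm : (MeasurableEquiv.piFinSuccAbove
      (fun _ : Fin (r + 1) => Metric.sphere (0 : MultiSpace d) 1) j).symm (x, y) =
      Fin.insertNth (α := fun _ => Metric.sphere (0 : MultiSpace d) 1) j x y := rfl
  refine hx ⟨v, fun k hk => ?_, ?_⟩
  · obtain ⟨i, rfl⟩ := Fin.exists_succAbove_eq hk
    rw [hsymm, Fin.insertNth_apply_succAbove]
    exact hv i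
  · rw [hsymm, Fin.insertNth_apply_same]
    exact hxw

/-- if `n ≤ 1 + ∑_j (d_j - 1)`, then almost every `n`-tuple of
unit vectors `(ψ_1, ..., ψ_n)` of `H` admits product vectors `φ_1, ..., φ_n` with
`⟨φ_j, ψ_k⟩ = 0` iff `j ≠ k` — i.e., by Chefles' criterion, the `n` states are
unambiguously locally distinguishable. -/
theorem generic_locally_distinguishable {m : ℕ} (d : Fin m → ℕ) (n : ℕ)
    (hn : (n : ℤ) ≤ 1 + ∑ j, ((d j : ℤ) - 1))
    [MeasurableSpace (MultiSpace d)] [BorelSpace (MultiSpace d)]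
    (μ : Measure (Metric.sphere (0 : MultiSpace d) 1)) [IsProbabilityMeasure μ]
    (hinv : ∀ U : MultiSpace d ≃ₗᵢ[ℂ] MultiSpace d, μ.map (sphereMap U) = μ) :
    ∀ᵐ ψ ∂(Measure.pi fun _ : Fin n => μ),
      ∃ φ : Fin n → MultiSpace d, (∀ j, IsProdVec d (φ j)) ∧
        ∀ j k : Fin n, ⟪φ j, (ψ k : MultiSpace d)⟫ = 0 ↔ j ≠ k := by
  -- The sphere carries a probability measure, so it is nonempty and no `d j` vanishes.
  obtain ⟨k₀⟩ : Nonempty ((j : Fin m) → Fin (d j)) := by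
    obtain ⟨x⟩ := nonempty_of_isProbabilityMeasure μ
    by_contra h
    rw [not_nonempty_iff] at h
    exact ne_zero_of_mem_unit_sphere x (Subsingleton.elim _ _)
  rcases n with _ | r
  · exact Filter.Eventually.of_forall fun ψ => ⟨fun j => j.elim0, fun j => j.elim0, fun j => j.elim0⟩
  have hr : r + m ≤ ∑ j, d j := by
    simp only [Finset.sum_sub_distrib, Finset.sum_const, Finset.card_univ, Fintype.card_fin] at hn
    zify
    push_cast at hn
    simp only [nsmul_eq_mul, mul_one] at hn
    linarith
  have hall := ae_all_iff.2 fun j => ae_mem_goodTuples d r hr k₀ μ hinv j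
  filter_upwards [hall] with ψ hψ
  choose v h0 h1 using hψ
  refine ⟨fun j => prodVec d (v j), fun j => isProdVec_prodVec d _ fun h => h1 j ?_,
    fun j k => ⟨?_, fun hjk => h0 j k hjk.symm⟩⟩
  · rw [h, inner_zero_left]
  · rintro h rfl
    exact h1 j h
end
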